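/- arXiv:0908.3521 — 9 statements merged into one kernel-verified Lean document; each statement's English description precedes it below -/
import Mathlib

section
/- Let p be an odd prime, n a natural number, and a : Fin n → ℚ_p coefficients such that the diagonal quadratic form Q(x) = ∑_i a_i · x_i² is anisotropic, i.e. Q(x) = 0 implies x = 0. Then for every x ∈ (ℚ_p)^n one has ‖Q(x)‖_p = max_i ‖a_i · x_i²‖_p (the maximum over i ∈ Fin n, interpreted as 0 when n = 0). -/
/-!
If some term `a i * x i ^ 2` were strictly larger than the sum `q` of all the terms, then
`1 - q / (a i * x i ^ 2)` would be a nonzero square `s ^ 2` by Hensel's lemma, and replacing `x i`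
by `x i * s` would turn `x` into a nonzero isotropic vector. Hence every term is bounded by the sum;
the ultrametric inequality gives the opposite bound.
-/

open Polynomial in
theorem isSquare_one_sub_of_mem {R : Type*} [CommRing R] {I : Ideal R} [HenselianRing R I]
    (h2 : IsUnit (2 : R)) {u : R} (hu : u ∈ I) : IsSquare (1 - u) := by
  have h_monic : (X ^ 2 - C (1 - u)).Monic := monic_X_pow_sub_C _ two_ne_zero
  have h_eval : (X ^ 2 - C (1 - u)).eval 1 ∈ I := by simpa using hu
  have h_deriv : IsUnit (Ideal.Quotient.mk I ((derivative (X ^ 2 - C (1 - u))).eval 1)) := by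
    simpa [one_add_one_eq_two] using h2.map (Ideal.Quotient.mk I)
  obtain ⟨s, hs, -⟩ := HenselianRing.is_henselian _ h_monic 1 h_eval h_deriv
  have hs' : s ^ 2 - (1 - u) = 0 := by simpa using hs
  exact ⟨s, by linear_combination -hs'⟩

theorem padicInt_isUnit_two {p : ℕ} [Fact p.Prime] (hp : p ≠ 2) : IsUnit (2 : ℤ_[p]) := by
  have h_coprime : p.Coprime 2 := (Nat.coprime_primes Fact.out Nat.prime_two).2 hp
  exact PadicInt.isUnit_iff.2 (PadicInt.norm_natCast_eq_one_iff.2 h_coprime)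

theorem padic_isSquare_one_sub {p : ℕ} [Fact p.Prime] (hp : p ≠ 2) {u : ℚ_[p]} (hu : ‖u‖ < 1) :
    IsSquare (1 - u) := by
  have h_mem : (⟨u, hu.le⟩ : ℤ_[p]) ∈ IsLocalRing.maximalIdeal ℤ_[p] := PadicInt.mem_nonunits.2 hu
  exact (isSquare_one_sub_of_mem (padicInt_isUnit_two hp) h_mem).map PadicInt.Coe.ringHom

section NormedField

variable {K : Type*} [NormedField K]

theorem exists_ne_zero_mul_sq_add_eq_zero (hsq : ∀ u : K, ‖u‖ < 1 → IsSquare (1 - u)) {b c : K}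
    (h : ‖b + c‖ < ‖b‖) : ∃ s ≠ 0, b * s ^ 2 + c = 0 := by
  have hb_pos : 0 < ‖b‖ := (norm_nonneg _).trans_lt h
  have hb : b ≠ 0 := norm_pos_iff.1 hb_pos
  have h_small : ‖(b + c) / b‖ < 1 := by rwa [norm_div, div_lt_one hb_pos]
  obtain ⟨s, hs⟩ := hsq _ h_small
  have h_eq : b * s ^ 2 + c = 0 := by
    rw [sq, ← hs]
    field_simp
    ring
  refine ⟨s, ?_, h_eq⟩
  rintro rfl
  have hc : c = 0 := by simpa using h_eq
  simp [hc] at h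

variable {ι : Type*} [Fintype ι] {a : ι → K}

theorem norm_mul_sq_le_norm_sum (hsq : ∀ u : K, ‖u‖ < 1 → IsSquare (1 - u))
    (haniso : ∀ x : ι → K, (∑ i, a i * x i ^ 2) = 0 → x = 0) (x : ι → K) (i : ι) :
    ‖a i * x i ^ 2‖ ≤ ‖∑ j, a j * x j ^ 2‖ := by
  classical
  by_contra! h
  have hxi : x i ≠ 0 := fun hxi ↦ by simp [hxi, (norm_nonneg _).not_gt] at h
  rw [← Finset.add_sum_erase _ _ (Finset.mem_univ i)] at h
  obtain ⟨s, hs, h_eq⟩ := exists_ne_zero_mul_sq_add_eq_zero hsq h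
  have h_rest : ∑ j ∈ Finset.univ.erase i, a j * Function.update x i (x i * s) j ^ 2 =
      ∑ j ∈ Finset.univ.erase i, a j * x j ^ 2 :=
    Finset.sum_congr rfl fun j hj ↦ by rw [Function.update_of_ne (Finset.ne_of_mem_erase hj)]
  have h_isotropic : ∑ j, a j * Function.update x i (x i * s) j ^ 2 = 0 := by
    rw [← Finset.add_sum_erase _ _ (Finset.mem_univ i), h_rest, Function.update_self, mul_pow,
      ← mul_assoc, h_eq]
  have h_zero : x i * s = 0 := by simpa using congrFun (haniso _ h_isotropic) i
  exact mul_ne_zero hxi hs h_zero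

theorem stmt_0_general [IsUltrametricDist K] (hsq : ∀ u : K, ‖u‖ < 1 → IsSquare (1 - u))
    (haniso : ∀ x : ι → K, (∑ i, a i * x i ^ 2) = 0 → x = 0) (x : ι → K) :
    ‖∑ i, a i * x i ^ 2‖ = ⨆ i, ‖a i * x i ^ 2‖ := by
  apply le_antisymm
  · refine IsUltrametricDist.norm_sum_le_of_forall_le_of_nonneg
      (Real.iSup_nonneg fun i ↦ norm_nonneg _) fun i _ ↦ ?_
    exact le_ciSup (f := fun i ↦ ‖a i * x i ^ 2‖) (Set.finite_range _).bddAbove i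
  · exact Real.iSup_le (norm_mul_sq_le_norm_sum hsq haniso x) (norm_nonneg _)

end NormedField

theorem stmt_0 (p : ℕ) [Fact p.Prime] (hp2 : p ≠ 2) (n : ℕ) (a : Fin n → ℚ_[p])
    (haniso : ∀ x : Fin n → ℚ_[p], (∑ i, a i * x i ^ 2) = 0 → x = 0) :
    ∀ x : Fin n → ℚ_[p], ‖∑ i, a i * x i ^ 2‖ = ⨆ i, ‖a i * x i ^ 2‖ :=
  stmt_0_general (fun _ ↦ padic_isSquare_one_sub hp2) haniso
end

section
/- Let p be an odd prime, t a nonzero integer whose p-adic valuation is T, and ℓ a natural number with ℓ > 2T. Then the number of elements x of ℤ/p^ℓℤ satisfying x² = t̄², where t̄ is the image of t in ℤ/p^ℓℤ, is exactly 2·p^T. -/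
/-!
Factor `x ^ 2 - t ^ 2 = (x - t) * (x + t)`. The two factors differ by `2 * t`, of valuation `T`
for odd `p`, so they cannot both be divisible by `p ^ (T + 1)`. Hence `p ^ ℓ` divides the product
exactly when `p ^ (ℓ - T)` divides one of the factors: the solutions are the lifts to `ℤ/p^ℓℤ` of
the residues `t` and `-t` modulo `p ^ (ℓ - T)`. These two residues are distinct because
`T < ℓ - T`, and each has `p ^ T` lifts. The same argument counts the roots of
`(x - a) * (x - b)` when `a - b` has valuation `T`.
-/

section PrimePowers

theorem pow_dvd_right_of_pow_add_dvd_mul {M : Type*} [CommMonoidWithZero M] [IsCancelMulZero M]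
    {p a b : M} {m n : ℕ} (hp : Prime p) (hab : p ^ (m + n) ∣ a * b) (ha : ¬p ^ (m + 1) ∣ a) :
    p ^ n ∣ b := by
  obtain ⟨y, hy⟩ := hab
  obtain ⟨i, j, c, d, hij, -, rfl, rfl⟩ := mul_eq_mul_prime_pow hp (hy.trans (mul_comm _ y))
  have hi : i ≤ m := by
    by_contra! hmi
    exact ha ((pow_dvd_pow p hmi).mul_left c)
  exact (pow_dvd_pow p (by lia)).mul_left d

variable {R : Type*} [CommRing R] {p a b x : R} {m n : ℕ}

theorem pow_add_dvd_sub_mul_sub_of_pow_dvd_sub (hmn : m ≤ n) (hab : p ^ m ∣ a - b)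
    (hx : p ^ n ∣ x - a) : p ^ (m + n) ∣ (x - a) * (x - b) := by
  have hxb : p ^ m ∣ x - b := by
    rw [← sub_add_sub_cancel x a b]
    exact dvd_add ((pow_dvd_pow p hmn).trans hx) hab
  rw [add_comm, pow_add]
  exact mul_dvd_mul hx hxb

theorem pow_add_dvd_sub_mul_sub_iff [IsDomain R] (hp : Prime p) (hmn : m ≤ n)
    (hab : p ^ m ∣ a - b) (hab' : ¬p ^ (m + 1) ∣ a - b) :
    p ^ (m + n) ∣ (x - a) * (x - b) ↔ p ^ n ∣ x - a ∨ p ^ n ∣ x - b := by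
  refine ⟨fun hx ↦ ?_, ?_⟩
  · by_cases hxa : p ^ (m + 1) ∣ x - a
    · have hxb : ¬p ^ (m + 1) ∣ x - b := fun hxb ↦
        hab' (by simpa only [sub_sub_sub_cancel_left] using dvd_sub hxb hxa)
      exact .inl (pow_dvd_right_of_pow_add_dvd_mul hp (by rwa [mul_comm]) hxb)
    · exact .inr (pow_dvd_right_of_pow_add_dvd_mul hp hx hxa)
  · rintro (hxa | hxb)
    · exact pow_add_dvd_sub_mul_sub_of_pow_dvd_sub hmn hab hxa
    · rw [mul_comm]
      exact pow_add_dvd_sub_mul_sub_of_pow_dvd_sub hmn (dvd_sub_comm.mp hab) hxb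

end PrimePowers

@[to_additive]
theorem card_preimage_of_surjective_monoidHom {G H : Type*} [Group G] [Group H] {f : G →* H}
    (hf : Function.Surjective f) (s : Set H) :
    Nat.card (f ⁻¹' s) = Nat.card f.ker * Nat.card s := by
  let e := (QuotientGroup.quotientKerEquivOfSurjective f hf).toEquiv
  calc Nat.card (f ⁻¹' s)
      = Nat.card (f.ker × (e ⁻¹' s)) :=
        Nat.card_congr (QuotientGroup.preimageMkEquivSubgroupProdSet f.ker (e ⁻¹' s))
    _ = Nat.card f.ker * Nat.card s := by
        rw [Nat.card_prod, Nat.card_preimage_of_injective e.injective (by simp)]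

theorem card_preimage_zmod_castHom {d n : ℕ} [NeZero d] (h : d ∣ n) (s : Set (ZMod d)) :
    Nat.card (ZMod.castHom h (ZMod d) ⁻¹' s) = n / d * Nat.card s := by
  let f : ZMod n →+ ZMod d := (ZMod.castHom h (ZMod d)).toAddMonoidHom
  have card_preimage (s : Set (ZMod d)) : Nat.card (f ⁻¹' s) = Nat.card f.ker * Nat.card s :=
    card_preimage_of_surjective_addMonoidHom (ZMod.castHom_surjective h) s
  have card_ker : n = Nat.card f.ker * d := by
    simpa only [Set.preimage_univ, Nat.card_univ, Nat.card_zmod] using card_preimage Set.univ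
  rw [Nat.div_eq_of_eq_mul_left (NeZero.pos d) card_ker]
  exact card_preimage s

section Roots

variable {p : ℕ} [Fact p.Prime] {a b : ℤ} {m n : ℕ}

theorem setOf_sub_mul_sub_eq_zero_eq_preimage_castHom (hmn : m ≤ n) (hab : (p : ℤ) ^ m ∣ a - b)
    (hab' : ¬(p : ℤ) ^ (m + 1) ∣ a - b) :
    {x : ZMod (p ^ (m + n)) | (x - a) * (x - b) = 0} =
      ZMod.castHom (pow_dvd_pow p (Nat.le_add_left n m)) (ZMod (p ^ n)) ⁻¹' {↑a, ↑b} := by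
  have hp : Prime (p : ℤ) := Nat.prime_iff_prime_int.mp Fact.out
  ext x
  obtain ⟨z, rfl⟩ := ZMod.intCast_surjective x
  have hdvd := pow_add_dvd_sub_mul_sub_iff (x := z) hp hmn hab hab'
  simp only [← Nat.cast_pow, ← ZMod.intCast_zmod_eq_zero_iff_dvd] at hdvd
  simpa only [Set.mem_ofPred_eq, Set.mem_preimage, Set.mem_insert_iff, Set.mem_singleton_iff,
    map_intCast, Int.cast_mul, Int.cast_sub, sub_eq_zero] using hdvd

theorem card_sub_mul_sub_eq_zero_zmod_prime_pow (hab : a ≠ b) {T ℓ : ℕ}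
    (hT : padicValInt p (a - b) = T) (hℓ : 2 * T < ℓ) :
    Nat.card {x : ZMod (p ^ ℓ) // (x - a) * (x - b) = 0} = 2 * p ^ T := by
  have pow_dvd_iff (k : ℕ) : (p : ℤ) ^ k ∣ a - b ↔ k ≤ T := by
    rw [padicValInt_dvd_iff, hT, or_iff_right (sub_ne_zero.mpr hab)]
  obtain ⟨n, rfl⟩ := Nat.exists_eq_add_of_le (show T ≤ ℓ by lia)
  have residues_ne : (a : ZMod (p ^ n)) ≠ b := by
    rw [← sub_ne_zero, ← Int.cast_sub, Ne, ZMod.intCast_zmod_eq_zero_iff_dvd, Nat.cast_pow,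
      pow_dvd_iff]
    lia
  calc Nat.card {x : ZMod (p ^ (T + n)) | (x - a) * (x - b) = 0}
      = p ^ (T + n) / p ^ n * Nat.card ({↑a, ↑b} : Set (ZMod (p ^ n))) := by
        rw [setOf_sub_mul_sub_eq_zero_eq_preimage_castHom (by lia) ((pow_dvd_iff T).mpr le_rfl)
          (by rw [pow_dvd_iff]; lia), card_preimage_zmod_castHom]
    _ = 2 * p ^ T := by
        rw [pow_add, Nat.mul_div_cancel _ (NeZero.pos _), Nat.card_coe_set_eq,
          Set.ncard_pair residues_ne, mul_comm]

end Roots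

theorem padicValInt_two_mul {p : ℕ} [hp : Fact p.Prime] (hp2 : p ≠ 2) {t : ℤ} (ht : t ≠ 0) :
    padicValInt p (2 * t) = padicValInt p t := by
  have hp_two : ¬(p : ℤ) ∣ 2 := by
    exact_mod_cast mt (Nat.prime_dvd_prime_iff_eq hp.out Nat.prime_two).mp hp2
  rw [padicValInt.mul two_ne_zero ht, padicValInt.eq_zero_of_not_dvd hp_two, zero_add]

theorem stmt_2_general (p : ℕ) (hp : p.Prime) (t : ℤ) (ht : t ≠ 0)
    (T : ℕ) (hT : padicValInt p (2 * t) = T) (ℓ : ℕ) (hℓ : 2 * T < ℓ) :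
    Nat.card {x : ZMod (p ^ ℓ) // x ^ 2 = (t : ZMod (p ^ ℓ)) ^ 2} = 2 * p ^ T := by
  have : Fact p.Prime := ⟨hp⟩
  have hcard := card_sub_mul_sub_eq_zero_zmod_prime_pow (self_ne_neg.mpr ht)
    (by rwa [sub_neg_eq_add, ← two_mul]) hℓ
  have sq_eq_iff (x : ZMod (p ^ ℓ)) : x ^ 2 = (t : ZMod (p ^ ℓ)) ^ 2 ↔
      (x - t) * (x - (-t : ℤ)) = 0 := by
    rw [Int.cast_neg, sub_neg_eq_add, mul_comm, ← sq_sub_sq, sub_eq_zero]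
  simpa only [sq_eq_iff] using hcard

theorem stmt_2 (p : ℕ) (hp : p.Prime) (hp2 : p ≠ 2) (t : ℤ) (ht : t ≠ 0)
    (T : ℕ) (hT : padicValInt p t = T) (ℓ : ℕ) (hℓ : 2 * T < ℓ) :
    Nat.card {x : ZMod (p ^ ℓ) // x ^ 2 = (t : ZMod (p ^ ℓ)) ^ 2} = 2 * p ^ T := by
  have : Fact p.Prime := ⟨hp⟩
  exact stmt_2_general p hp t ht T ((padicValInt_two_mul hp2 ht).trans hT) ℓ hℓ
end

section
/- Let p be an odd prime, Δ an integer not divisible by p, and set ε = 1 if the image of Δ in ℤ/pℤ is a square and ε = −1 otherwise. Let t be a nonzero integer with p-adic valuation T. For a natural number ℓ let X_ℓ = N_ℓ / p^ℓ, where N_ℓ is the number of x ∈ ℤ/p^ℓℤ with Δ̄·x² = t̄². Then for every real z with |z| < 1, setting w = z/p and u = z²/p, the series ∑_{ℓ≥0} z^ℓ · X_ℓ converges with sum ((1+w)/(1−u)) · (1 − ((u − ε·w)/(1 − ε·w)) · u^T). -/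
/-!
If `p ∤ t`, substituting `y = Δ * x / t` turns the equation into `y ^ 2 = Δ`, whose solutions
modulo `p ^ (ℓ + 1)` correspond to those modulo `p` by Newton's method; hence `N_{ℓ+1} = 1 + ε`.
A solution of `Δ * x ^ 2 = (p * t) ^ 2` is divisible by `p`, and dividing it by `p` gives
`N_{ℓ+2}(p * t) = p * N_ℓ(t)`. For the generating series this means that each factor `p` of `t`
acts by `s ↦ 1 + w + u * s`, starting from the geometric series with sum `(1 + w) / (1 - ε * w)`.
-/

section NilpotentKernel

open Polynomial

variable {R S : Type*} [CommRing R] [CommRing S] {f : R →+* S}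

theorem isLocalHom_of_ker_le_nilradical (hf : Function.Surjective f)
    (hker : RingHom.ker f ≤ nilradical R) : IsLocalHom f where
  map_nonunit x hx := by
    obtain ⟨b, hb⟩ := hx.exists_right_inv
    obtain ⟨y, rfl⟩ := hf b
    have hnil : IsNilpotent (x * y - 1) := hker (by simp [RingHom.mem_ker, hb])
    exact isUnit_of_mul_isUnit_left (by simpa using hnil.isUnit_add_one)

theorem card_roots_eq_card_roots_map (hf : Function.Surjective f)
    (hker : RingHom.ker f ≤ nilradical R) {P : R[X]}
    (hP : ∀ y, (P.map f).eval y = 0 → IsUnit ((P.map f).derivative.eval y)) :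
    Nat.card {x : R // P.eval x = 0} = Nat.card {y : S // (P.map f).eval y = 0} := by
  have := isLocalHom_of_ker_le_nilradical hf hker
  have newton (x : R) (hx : (P.map f).eval (f x) = 0) :
      ∃! r, IsNilpotent (x - r) ∧ P.eval r = 0 := by
    have hderiv : IsUnit (P.derivative.eval x) := by
      simpa [derivative_map, eval_map_apply] using hP _ hx
    rw [eval_map_apply] at hx
    simpa using existsUnique_nilpotent_sub_and_aeval_eq_zero (hker hx) hderiv
  have hroot (x : {x : R // P.eval x = 0}) : (P.map f).eval (f x) = 0 := by
    rw [eval_map_apply, x.2, map_zero]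
  refine Nat.card_eq_of_bijective (fun x => ⟨f x, hroot x⟩) ⟨fun x x' hxx' => ?_, fun y => ?_⟩
  · have hnil : IsNilpotent (x.1 - x') :=
      hker (by simpa [RingHom.mem_ker, sub_eq_zero] using hxx')
    exact Subtype.ext ((newton x (hroot x)).unique ⟨by simp, x.2⟩ ⟨hnil, x'.2⟩)
  · obtain ⟨x, hx⟩ := hf y
    obtain ⟨r, ⟨hnil, hr⟩, -⟩ := newton x (by rw [hx, y.2])
    have hnil' : IsNilpotent (y.1 - f r) := by simpa [hx] using hnil.map f
    have unique := existsUnique_nilpotent_sub_and_aeval_eq_zero (P := P.map f) (x := y.1)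
      (by simp [y.2]) (by simpa using hP y y.2)
    exact ⟨⟨r, hr⟩, Subtype.ext <|
      unique.unique ⟨hnil', by simpa using hroot ⟨r, hr⟩⟩ ⟨by simp, by simp [y.2]⟩⟩

theorem card_sq_eq_of_ker_le_nilradical (hf : Function.Surjective f)
    (hker : RingHom.ker f ≤ nilradical R) {d : R} (hd : IsUnit (f d)) (h2 : IsUnit (2 : S)) :
    Nat.card {x : R // x ^ 2 = d} = Nat.card {y : S // y ^ 2 = f d} := by
  have hP : ∀ y, ((X ^ 2 - C d).map f).eval y = 0 →
      IsUnit (((X ^ 2 - C d).map f).derivative.eval y) := by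
    intro y hy
    have hy : y ^ 2 = f d := by simpa [sub_eq_zero] using hy
    have hunit : IsUnit y := (isUnit_pow_iff two_ne_zero).1 (hy ▸ hd)
    simpa [one_add_one_eq_two] using h2.mul hunit
  simpa [sub_eq_zero] using card_roots_eq_card_roots_map hf hker hP

end NilpotentKernel

theorem ker_castHom_pow_le_nilradical (n : ℕ) {k : ℕ} (hk : k ≠ 0) :
    RingHom.ker (ZMod.castHom (dvd_pow_self n hk) (ZMod n)) ≤ nilradical (ZMod (n ^ k)) := by
  intro x hx
  obtain ⟨a, rfl⟩ := ZMod.intCast_surjective x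
  rw [RingHom.mem_ker, map_intCast, ZMod.intCast_zmod_eq_zero_iff_dvd] at hx
  have hpow : ((a ^ k : ℤ) : ZMod (n ^ k)) = 0 := by
    rw [ZMod.intCast_zmod_eq_zero_iff_dvd, Nat.cast_pow]
    exact pow_dvd_pow_of_dvd hx k
  exact ⟨k, by exact_mod_cast hpow⟩

theorem card_mul_sq_eq_sq {M : Type*} [CommMonoid M] {d t : M} (hd : IsUnit d) (ht : IsUnit t) :
    Nat.card {x : M // d * x ^ 2 = t ^ 2} = Nat.card {y : M // y ^ 2 = d} := by
  obtain ⟨d, rfl⟩ := hd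
  obtain ⟨t, rfl⟩ := ht
  refine Nat.card_congr ((Units.mulLeft (d * t⁻¹)).subtypeEquiv fun x => ?_)
  have hsq : Units.mulLeft (d * t⁻¹) x ^ 2 = ↑(d * (t⁻¹) ^ 2) * (d * x ^ 2) := by
    simp only [Units.mulLeft_apply, Units.val_mul, sq]
    ac_rfl
  have hd : (d : M) = ↑(d * (t⁻¹) ^ 2) * t ^ 2 := by
    simp [mul_assoc, ← mul_pow]
  calc (d : M) * x ^ 2 = t ^ 2
      ↔ ↑(d * (t⁻¹) ^ 2) * (d * x ^ 2) = ↑(d * (t⁻¹) ^ 2) * (t : M) ^ 2 :=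
        (Units.mul_right_inj _).symm
    _ ↔ Units.mulLeft (d * t⁻¹) x ^ 2 = d := by rw [hsq, ← hd]

theorem count_natCast_zmod {n : ℕ} [NeZero n] (P : ZMod n → Prop) [DecidablePred P] (m : ℕ) :
    Nat.count (fun k : ℕ => P k) (m * n) = m * Nat.card {x : ZMod n // P x} := by
  have hperiod : Nat.count (fun k : ℕ => P k) n = Nat.card {x : ZMod n // P x} := by
    rw [Nat.card_eq_fintype_card, Fintype.card_subtype, Nat.count_eq_card_filter_range]
    refine Finset.card_nbij' (fun k => (k : ZMod n)) ZMod.val ?_ ?_ ?_ ?_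
    · intro k
      simp
    · intro x
      simp [ZMod.val_lt]
    · intro k hk
      exact ZMod.val_cast_of_lt (Finset.mem_range.1 (Finset.mem_filter.1 hk).1)
    · intro x _
      exact ZMod.natCast_zmod_val x
  induction m with
  | zero => simp
  | succ m ih => simp [add_mul, Nat.count_add, ih, hperiod]

theorem count_mul_of_forall_dvd {P : ℕ → Prop} [DecidablePred P] {m : ℕ} (hm : m ≠ 0)
    (hP : ∀ k, P k → m ∣ k) (n : ℕ) :
    Nat.count P (m * n) = Nat.count (fun k => P (m * k)) n := by
  simp only [Nat.count_eq_card_filter_range]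
  symm
  refine Finset.card_nbij (m * ·) (fun k hk => ?_)
    (fun _ _ _ _ h => Nat.eq_of_mul_eq_mul_left (by positivity) h) (fun k hk => ?_)
  · simpa [Nat.pos_of_ne_zero hm] using hk
  · obtain ⟨j, rfl⟩ := hP k (Finset.mem_filter.1 hk).2
    exact ⟨j, by simpa [Nat.pos_of_ne_zero hm] using hk, rfl⟩

/-- The number `N_ℓ` of solutions of `Δ * x ^ 2 = t ^ 2` in `ZMod (p ^ ℓ)`, as a function of `t`
and `ℓ`. -/
noncomputable def solutionCount (p : ℕ) (Δ t : ℤ) (ℓ : ℕ) : ℕ :=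
  Nat.card {x : ZMod (p ^ ℓ) // (Δ : ZMod (p ^ ℓ)) * x ^ 2 = (t : ZMod (p ^ ℓ)) ^ 2}

section SolutionCount

variable {p : ℕ} {Δ t : ℤ}

open Classical in
theorem mul_solutionCount_eq_count [NeZero p] (m ℓ : ℕ) :
    m * solutionCount p Δ t ℓ =
      Nat.count (fun k : ℕ => (p : ℤ) ^ ℓ ∣ Δ * k ^ 2 - t ^ 2) (m * p ^ ℓ) := by
  rw [solutionCount, ← count_natCast_zmod]
  congr with k
  have hzero := ZMod.intCast_zmod_eq_zero_iff_dvd (Δ * k ^ 2 - t ^ 2) (p ^ ℓ)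
  push_cast [sub_eq_zero] at hzero
  exact hzero

theorem solutionCount_zero [NeZero p] : solutionCount p Δ t 0 = 1 := by
  classical
  rw [← one_mul (solutionCount p Δ t 0), mul_solutionCount_eq_count]
  simp

theorem dvd_of_dvd_mul_sq_sub_sq {R : Type*} [CommRing R] {q d t x : R} (hq : Prime q)
    (hd : ¬ q ∣ d) (ht : q ∣ t) (h : q ∣ d * x ^ 2 - t ^ 2) : q ∣ x := by
  have hmul : q ∣ d * x ^ 2 := (dvd_sub_left (dvd_pow ht two_ne_zero)).1 h
  exact hq.dvd_of_dvd_pow ((hq.dvd_or_dvd hmul).resolve_left hd)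

variable [Fact p.Prime]

open Classical in
theorem solutionCount_prime_mul_eq_count (hΔ : ¬ (p : ℤ) ∣ Δ) (ℓ : ℕ) :
    solutionCount p Δ (p * t) (ℓ + 1) =
      Nat.count (fun k : ℕ => (p : ℤ) ^ (ℓ + 1) ∣ p ^ 2 * (Δ * k ^ 2 - t ^ 2)) (p ^ ℓ) := by
  have hp : Prime (p : ℤ) := Nat.prime_iff_prime_int.1 Fact.out
  have hdvd (k : ℕ) (hk : (p : ℤ) ^ (ℓ + 1) ∣ Δ * k ^ 2 - (p * t) ^ 2) : p ∣ k :=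
    Int.natCast_dvd_natCast.1 <| dvd_of_dvd_mul_sq_sub_sq hp hΔ (dvd_mul_right _ _)
      ((dvd_pow_self _ ℓ.succ_ne_zero).trans hk)
  rw [← one_mul (solutionCount _ _ _ _), mul_solutionCount_eq_count, one_mul, pow_succ' p,
    count_mul_of_forall_dvd (NeZero.ne p) hdvd]
  congr with k
  push_cast
  ring_nf

theorem solutionCount_prime_mul_one (hΔ : ¬ (p : ℤ) ∣ Δ) : solutionCount p Δ (p * t) 1 = 1 := by
  classical
  have hdvd : (p : ℤ) ∣ p ^ 2 * (Δ * (0 : ℕ) ^ 2 - t ^ 2) :=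
    (dvd_pow_self _ two_ne_zero).mul_right _
  rw [solutionCount_prime_mul_eq_count hΔ 0, pow_zero, Nat.count_one, zero_add, pow_one,
    if_pos hdvd]

theorem solutionCount_prime_mul_add_two (hΔ : ¬ (p : ℤ) ∣ Δ) (ℓ : ℕ) :
    solutionCount p Δ (p * t) (ℓ + 2) = p * solutionCount p Δ t ℓ := by
  classical
  have hp : (p : ℤ) ^ 2 ≠ 0 := pow_ne_zero 2 (NeZero.ne _)
  have hcancel (a : ℤ) : (p : ℤ) ^ (ℓ + 1 + 1) ∣ p ^ 2 * a ↔ (p : ℤ) ^ ℓ ∣ a := by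
    rw [add_assoc, add_comm, pow_add, mul_dvd_mul_iff_left hp]
  rw [solutionCount_prime_mul_eq_count hΔ, mul_solutionCount_eq_count, pow_succ' p]
  simp only [hcancel]

theorem solutionCount_succ_of_not_dvd (hp2 : p ≠ 2) (hΔ : ¬ (p : ℤ) ∣ Δ) (ht : ¬ (p : ℤ) ∣ t)
    (ℓ : ℕ) : (solutionCount p Δ t (ℓ + 1) : ℤ) = 1 + legendreSym p Δ := by
  have hsurj := ZMod.castHom_surjective (dvd_pow_self p ℓ.succ_ne_zero)
  have hker := ker_castHom_pow_le_nilradical p ℓ.succ_ne_zero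
  have := isLocalHom_of_ker_le_nilradical hsurj hker
  have hunit {a : ℤ} (ha : ¬ (p : ℤ) ∣ a) : IsUnit (a : ZMod (p ^ (ℓ + 1))) := by
    apply isUnit_of_map_unit (ZMod.castHom (dvd_pow_self p ℓ.succ_ne_zero) (ZMod p))
    rwa [map_intCast, isUnit_iff_ne_zero, ne_eq, ZMod.intCast_zmod_eq_zero_iff_dvd]
  have h2 : IsUnit (2 : ZMod p) :=
    isUnit_iff_ne_zero.2 (Ring.two_ne_zero (by rwa [ZMod.ringChar_zmod_n]))
  have hcard := legendreSym.card_sqrts p hp2 Δ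
  rw [← Set.ncard_eq_toFinset_card'] at hcard
  rw [solutionCount, card_mul_sq_eq_sq (hunit hΔ) (hunit ht),
    card_sq_eq_of_ker_le_nilradical hsurj hker ((hunit hΔ).map _) h2, map_intCast, add_comm]
  exact hcard

end SolutionCount

theorem legendreSym_eq_ite {p : ℕ} [Fact p.Prime] {Δ : ℤ} [Decidable (IsSquare (Δ : ZMod p))]
    (hΔ : ¬ (p : ℤ) ∣ Δ) : legendreSym p Δ = if IsSquare (Δ : ZMod p) then 1 else -1 := by
  have hΔ0 : (Δ : ZMod p) ≠ 0 := by rwa [ne_eq, ZMod.intCast_zmod_eq_zero_iff_dvd]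
  split_ifs with h
  · exact (legendreSym.eq_one_iff p hΔ0).2 h
  · exact (legendreSym.eq_neg_one_iff p).2 h

theorem sq_eq_one_of_eq_legendreSym {p : ℕ} [Fact p.Prime] {Δ : ℤ} {R : Type*} [Ring R] {ε : R}
    (hΔ : ¬ (p : ℤ) ∣ Δ) (hε : ε = legendreSym p Δ) : ε ^ 2 = 1 := by
  have hΔ0 : (Δ : ZMod p) ≠ 0 := by rwa [ne_eq, ZMod.intCast_zmod_eq_zero_iff_dvd]
  rw [hε]
  exact_mod_cast congrArg (Int.cast (R := R)) (legendreSym.sq_one p hΔ0)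

theorem one_sub_mul_ne_zero_of_sq_eq_one {K : Type*} [NormedDivisionRing K] {w ε : K}
    (hε : ε ^ 2 = 1) (hw : ‖w‖ < 1) : 1 - ε * w ≠ 0 := by
  have hε1 : ‖ε‖ = 1 := by
    rw [← pow_eq_one_iff_of_nonneg (norm_nonneg ε) two_ne_zero, ← norm_pow, hε, norm_one]
  exact (isUnit_one_sub_of_norm_lt_one (by rwa [norm_mul, hε1, one_mul])).ne_zero

section GeneratingSeries

variable {p : ℕ} [Fact p.Prime] {Δ t : ℤ} {K : Type*} [NormedField K] {w ε : K}

theorem hasSum_solutionCount_of_not_dvd (hp2 : p ≠ 2) (hΔ : ¬ (p : ℤ) ∣ Δ) (ht : ¬ (p : ℤ) ∣ t)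
    (hw : ‖w‖ < 1) (hε : ε = legendreSym p Δ) :
    HasSum (fun ℓ => (solutionCount p Δ t ℓ : K) * w ^ ℓ) ((1 + w) / (1 - ε * w)) := by
  have hterm (ℓ : ℕ) :
      (solutionCount p Δ t (ℓ + 1) : K) * w ^ (ℓ + 1) = (1 + ε) * w * w ^ ℓ := by
    have hcount : (solutionCount p Δ t (ℓ + 1) : K) = 1 + ε := by
      rw [hε]
      exact_mod_cast congrArg (Int.cast (R := K)) (solutionCount_succ_of_not_dvd hp2 hΔ ht ℓ)
    rw [hcount]
    ring
  have htail := (hasSum_geometric_of_norm_lt_one hw).mul_left ((1 + ε) * w)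
  simp only [← hterm] at htail
  have hsum := (hasSum_nat_add_iff (f := fun ℓ => (solutionCount p Δ t ℓ : K) * w ^ ℓ) 1).1 htail
  have hε2 : ε ^ 2 = 1 := sq_eq_one_of_eq_legendreSym hΔ hε
  have hw0 : 1 - w ≠ 0 := (isUnit_one_sub_of_norm_lt_one hw).ne_zero
  have hvalue : (1 + ε) * w * (1 - w)⁻¹ + 1 = (1 + w) / (1 - ε * w) := by
    rw [eq_div_iff (one_sub_mul_ne_zero_of_sq_eq_one hε2 hw)]
    field_simp
    linear_combination -w ^ 2 * hε2
  rwa [Finset.sum_range_one, solutionCount_zero, Nat.cast_one, pow_zero, one_mul, hvalue] at hsum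

theorem hasSum_solutionCount_prime_mul (hΔ : ¬ (p : ℤ) ∣ Δ) {s : K}
    (hs : HasSum (fun ℓ => (solutionCount p Δ t ℓ : K) * w ^ ℓ) s) :
    HasSum (fun ℓ => (solutionCount p Δ (p * t) ℓ : K) * w ^ ℓ) (1 + w + p * w ^ 2 * s) := by
  have hterm (ℓ : ℕ) : (solutionCount p Δ (p * t) (ℓ + 2) : K) * w ^ (ℓ + 2) =
      p * w ^ 2 * (solutionCount p Δ t ℓ * w ^ ℓ) := by
    rw [solutionCount_prime_mul_add_two hΔ]
    push_cast
    ring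
  have htail := hs.mul_left (p * w ^ 2)
  simp only [← hterm] at htail
  have hsum :=
    (hasSum_nat_add_iff (f := fun ℓ => (solutionCount p Δ (p * t) ℓ : K) * w ^ ℓ) 2).1 htail
  rwa [Finset.sum_range_succ, Finset.sum_range_one, solutionCount_zero,
    solutionCount_prime_mul_one hΔ, Nat.cast_one, pow_zero, pow_one, one_mul, one_mul,
    add_comm] at hsum

theorem hasSum_solutionCount_prime_pow_mul (hp2 : p ≠ 2) (hΔ : ¬ (p : ℤ) ∣ Δ)
    (ht : ¬ (p : ℤ) ∣ t) (hw : ‖w‖ < 1) {u : K} (hu : u = p * w ^ 2) (hu1 : u ≠ 1)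
    (hε : ε = legendreSym p Δ) (T : ℕ) :
    HasSum (fun ℓ => (solutionCount p Δ (p ^ T * t) ℓ : K) * w ^ ℓ)
      (((1 + w) / (1 - u)) * (1 - ((u - ε * w) / (1 - ε * w)) * u ^ T)) := by
  have hεw0 : 1 - ε * w ≠ 0 :=
    one_sub_mul_ne_zero_of_sq_eq_one (sq_eq_one_of_eq_legendreSym hΔ hε) hw
  have hu0 : 1 - u ≠ 0 := sub_ne_zero.2 hu1.symm
  induction T with
  | zero =>
    convert hasSum_solutionCount_of_not_dvd hp2 hΔ ht hw hε using 1
    · simp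
    · rw [pow_zero, mul_one, one_sub_div hεw0]
      field_simp
      ring
  | succ T ih =>
    convert hasSum_solutionCount_prime_mul hΔ ih using 1
    · simp [pow_succ', mul_assoc]
    · rw [← hu]
      field_simp
      ring

end GeneratingSeries

theorem exists_eq_pow_padicValInt_mul_and_not_dvd {p : ℕ} (hp : p ≠ 1) {t : ℤ} (ht : t ≠ 0) :
    ∃ c : ℤ, t = p ^ padicValInt p t * c ∧ ¬ (p : ℤ) ∣ c := by
  rw [padicValInt.of_ne_one_ne_zero hp ht]
  exact (Int.finiteMultiplicity_iff.2 ⟨by simpa using hp, ht⟩).exists_eq_pow_mul_and_not_dvd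

open Classical in
theorem stmt_4_general {K : Type*} [NormedField K] (p : ℕ) (hp : p.Prime) (hp2 : p ≠ 2)
    (Δ : ℤ) (hΔ : ¬ (p : ℤ) ∣ Δ) (ε : K) (hε : ε = if IsSquare (Δ : ZMod p) then 1 else -1)
    (t : ℤ) (ht : t ≠ 0) (T : ℕ) (hT : padicValInt p t = T)
    (z : K) (hz : ‖z‖ < ‖(p : K)‖) (hzp : z ^ 2 ≠ p) (w u : K) (hw : w = z / p)
    (hu : u = z ^ 2 / p) :
    HasSum
      (fun ℓ : ℕ => z ^ ℓ *
        ((Nat.card {x : ZMod (p ^ ℓ) //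
            (Δ : ZMod (p ^ ℓ)) * x ^ 2 = (t : ZMod (p ^ ℓ)) ^ 2} : K) / p ^ ℓ))
      (((1 + w) / (1 - u)) * (1 - ((u - ε * w) / (1 - ε * w)) * u ^ T)) := by
  have : Fact p.Prime := ⟨hp⟩
  have hp0 : (p : K) ≠ 0 := norm_pos_iff.1 ((norm_nonneg z).trans_lt hz)
  have hw1 : ‖w‖ < 1 := by rwa [hw, norm_div, div_lt_one (norm_pos_iff.2 hp0)]
  have hu1 : u ≠ 1 := by rwa [hu, ne_eq, div_eq_one_iff_eq hp0]
  have huw : u = p * w ^ 2 := by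
    rw [hu, hw]
    field_simp
  have hε' : ε = legendreSym p Δ := by simp [hε, legendreSym_eq_ite hΔ]
  obtain ⟨c, htc, hc⟩ := exists_eq_pow_padicValInt_mul_and_not_dvd hp.ne_one ht
  rw [hT] at htc
  convert hasSum_solutionCount_prime_pow_mul hp2 hΔ hc hw1 huw hu1 hε' T using 2 with ℓ
  rw [← htc, hw, div_pow, mul_div_left_comm]
  rfl

open Classical in
theorem stmt_4 (p : ℕ) (hp : p.Prime) (hp2 : p ≠ 2) (Δ : ℤ) (hΔ : ¬ (p : ℤ) ∣ Δ)
    (ε : ℝ) (hε : ε = if IsSquare (Δ : ZMod p) then 1 else -1)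
    (t : ℤ) (ht : t ≠ 0) (T : ℕ) (hT : padicValInt p t = T)
    (z : ℝ) (hz : |z| < 1) (w u : ℝ) (hw : w = z / p) (hu : u = z ^ 2 / p) :
    HasSum
      (fun ℓ : ℕ => z ^ ℓ *
        ((Nat.card {x : ZMod (p ^ ℓ) //
            (Δ : ZMod (p ^ ℓ)) * x ^ 2 = (t : ZMod (p ^ ℓ)) ^ 2} : ℝ) / p ^ ℓ))
      (((1 + w) / (1 - u)) * (1 - ((u - ε * w) / (1 - ε * w)) * u ^ T)) := by
  have hp1 : (1 : ℝ) < p := by exact_mod_cast hp.one_lt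
  exact stmt_4_general p hp hp2 Δ hΔ ε hε t ht T hT z (by simpa using hz.trans hp1)
    (((sq_lt_one_iff_abs_lt_one z).2 hz).trans hp1).ne w u hw hu
end

section
/- Let p be an odd prime, Δ an integer not divisible by p, and set ε = 1 if the image of Δ in ℤ/pℤ is a square and ε = −1 otherwise. For natural numbers T and ℓ, let N_{T,ℓ} be the number of x ∈ ℤ/p^ℓℤ with Δ̄·x² equal to the image of p^{2T} in ℤ/p^ℓℤ. Then for all real a, z with |a| < 1 and |z| < 1, setting w = z/p and u = z²/p, the double series indexed by (T,ℓ) ∈ ℕ×ℕ with terms a^T · z^ℓ · N_{T,ℓ}/p^ℓ converges with sum (1 − w²)(1 − ε·a·w) / ((1 − a)(1 − w)(1 − ε·w)(1 − a·u)). -/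
/-!
Write `N T l` for the number of solutions of `Δ x² = p ^ (2T)` modulo `p ^ l`. For `l ≥ 1`, the
equation `Δ x² = 1` has two solutions modulo `p ^ l` or none, according to whether `Δ` is a square
modulo `p`. If `l ≥ 2` and `T ≥ 1`, every solution is divisible by `p`, and dividing it by `p` gives
`N T l = p * N (T - 1) (l - 2)`. So the general term of the series gets multiplied by `a * u` under
the shift `(T, l) ↦ (T + 1, l + 2)`. Since every pair of natural numbers is uniquely an iterated
shift of one with `T = 0` or `l < 2`, the double series is `(1 - a * u)⁻¹` times the sum over these
boundary pairs, which consists of geometric series.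
-/

open Function

section DiagonalShift

/-- The enumeration of `ℕ × ℕ` by the orbits of the shift `(T, l) ↦ (T + 1, l + 2)`: a pair `(k, s)`
is sent to the `k`-th shift of the boundary point `s`, which is `(0, l)`, `(T + 1, 0)` or
`(T + 1, 1)` for the three summands. -/
def diagonalShiftOrbit : ℕ × (ℕ ⊕ ℕ ⊕ ℕ) → ℕ × ℕ
  | (k, .inl l) => (k, l + 2 * k)
  | (k, .inr (.inl T)) => (T + 1 + k, 2 * k)
  | (k, .inr (.inr T)) => (T + 1 + k, 1 + 2 * k)

theorem diagonalShiftOrbit_bijective : Bijective diagonalShiftOrbit := by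
  constructor
  · rintro ⟨k, l | T | T⟩ ⟨k', l' | T' | T'⟩ h <;>
      simp only [diagonalShiftOrbit, Prod.mk.injEq, Sum.inl.injEq, Sum.inr.injEq, reduceCtorEq,
        and_false] at h ⊢ <;> omega
  · rintro ⟨T, l⟩
    by_cases hTl : 2 * T ≤ l
    · refine ⟨(T, .inl (l - 2 * T)), ?_⟩
      simp only [diagonalShiftOrbit, Prod.mk.injEq, true_and]
      omega
    obtain ⟨k, rfl | rfl⟩ := Nat.even_or_odd' l
    · refine ⟨(k, .inr (.inl (T - 1 - k))), ?_⟩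
      simp only [diagonalShiftOrbit, Prod.mk.injEq, and_true]
      omega
    · refine ⟨(k, .inr (.inr (T - 1 - k))), ?_⟩
      simp only [diagonalShiftOrbit, Prod.mk.injEq]
      omega

theorem diagonalShiftOrbit_succ (k : ℕ) (s : ℕ ⊕ ℕ ⊕ ℕ) :
    diagonalShiftOrbit (k + 1, s) =
      ((diagonalShiftOrbit (k, s)).1 + 1, (diagonalShiftOrbit (k, s)).2 + 2) := by
  rcases s with l | T | T <;> simp only [diagonalShiftOrbit, Prod.mk.injEq, true_and] <;> omega

theorem hasSum_of_diagonalShift {K : Type*} [NormedField K] [CompleteSpace K] {f : ℕ × ℕ → K}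
    {r : K} (hr : ‖r‖ < 1) (hshift : ∀ T l, f (T + 1, l + 2) = r * f (T, l))
    (hrow : Summable fun l => ‖f (0, l)‖) (hcol₀ : Summable fun T => ‖f (T + 1, 0)‖)
    (hcol₁ : Summable fun T => ‖f (T + 1, 1)‖) :
    HasSum f ((1 - r)⁻¹ *
      (∑' l, f (0, l) + (∑' T, f (T + 1, 0) + ∑' T, f (T + 1, 1)))) := by
  let g : ℕ ⊕ ℕ ⊕ ℕ → K :=
    Sum.elim (fun l => f (0, l)) (Sum.elim (fun T => f (T + 1, 0)) fun T => f (T + 1, 1))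
  have horbit : ∀ k s, f (diagonalShiftOrbit (k, s)) = r ^ k * g s := by
    intro k s
    induction k with
    | zero => rcases s with l | T | T <;> simp [g, diagonalShiftOrbit]
    | succ k ih => rw [diagonalShiftOrbit_succ, hshift, ih, pow_succ', mul_assoc]
  have hg_norm : Summable fun s => ‖g s‖ := .sum _ hrow (.sum _ hcol₀ hcol₁)
  have hg_tsum : ∑' s, g s = ∑' l, f (0, l) + (∑' T, f (T + 1, 0) + ∑' T, f (T + 1, 1)) :=
    (hrow.of_norm.hasSum.sum (f := g)
      (hcol₀.of_norm.hasSum.sum (f := g ∘ .inr) hcol₁.of_norm.hasSum)).tsum_eq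
  have hr_norm := summable_norm_geometric_of_norm_lt_one hr
  rw [← (Equiv.ofBijective _ diagonalShiftOrbit_bijective).hasSum_iff, ← hg_tsum,
    ← tsum_geometric_of_norm_lt_one hr, tsum_mul_tsum_of_summable_norm hr_norm hg_norm]
  exact (summable_mul_of_summable_norm hr_norm hg_norm).hasSum.congr_fun fun q => horbit q.1 q.2

end DiagonalShift

section Count

variable {P : ℕ → Prop} [DecidablePred P]

theorem count_mul_of_periodic {M : ℕ} (hP : Periodic P M) (k : ℕ) :
    Nat.count P (k * M) = k * Nat.count P M := by
  induction k with
  | zero => simp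
  | succ k ih =>
    have hblock : ∀ j, P (k * M + j) = P j := fun j => by rw [add_comm]; exact hP.nat_mul k j
    rw [add_one_mul, Nat.count_add, ih, add_one_mul]
    simp only [hblock]

theorem count_mul_of_imp_dvd {n : ℕ} (hn : n ≠ 0) (hP : ∀ x, P x → n ∣ x) (k : ℕ) :
    Nat.count P (n * k) = Nat.count (fun y => P (n * y)) k := by
  have himage : {x ∈ Finset.range (n * k) | P x} =
      {y ∈ Finset.range k | P (n * y)}.image (n * ·) := by
    ext x
    simp only [Finset.mem_filter, Finset.mem_range, Finset.mem_image]
    constructor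
    · rintro ⟨hlt, hx⟩
      obtain ⟨y, rfl⟩ := hP x hx
      exact ⟨y, ⟨lt_of_mul_lt_mul_left' hlt, hx⟩, rfl⟩
    · rintro ⟨y, ⟨hlt, hy⟩, rfl⟩
      exact ⟨Nat.mul_lt_mul_of_pos_left hlt hn.bot_lt, hy⟩
  rw [Nat.count_eq_card_filter_range, Nat.count_eq_card_filter_range, himage,
    Finset.card_image_of_injective _ (mul_right_injective₀ hn)]

theorem natCard_zmod_subtype_eq_count (n : ℕ) [NeZero n] (Q : ZMod n → Prop) [DecidablePred Q] :
    Nat.card {x // Q x} = Nat.count (fun k : ℕ => Q k) n := by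
  rw [Nat.card_eq_fintype_card, Fintype.card_subtype, Nat.count_eq_card_filter_range]
  refine Finset.card_nbij' ZMod.val (↑) ?_ ?_ ?_ ?_
  · intro x hx
    simpa [ZMod.val_lt] using hx
  · intro k hk
    simp_all
  · intro x _
    exact ZMod.natCast_zmod_val x
  · intro k hk
    exact ZMod.val_cast_of_lt (by simp_all)

end Count

section LocalRing

theorem eq_or_eq_neg_of_sq_eq_sq_of_isUnit {R : Type*} [CommRing R] [IsLocalRing R]
    (h2 : IsUnit (2 : R)) {x y : R} (hy : IsUnit y) (hxy : x ^ 2 = y ^ 2) : x = y ∨ x = -y := by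
  have hprod : (x + y) * (y - x) = 0 := by linear_combination -hxy
  have hsum : IsUnit ((x + y) + (y - x)) := by
    rw [show (x + y) + (y - x) = 2 * y by ring]
    exact h2.mul hy
  rcases IsLocalRing.isUnit_or_isUnit_of_isUnit_add hsum with h | h
  · exact .inl (sub_eq_zero.1 (h.mul_right_eq_zero.1 hprod)).symm
  · exact .inr (eq_neg_of_add_eq_zero_left (h.mul_left_eq_zero.1 hprod))

theorem isLocalRing_zmod_prime_pow (p : ℕ) [Fact p.Prime] {l : ℕ} (hl : l ≠ 0) :
    IsLocalRing (ZMod (p ^ l)) :=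
  have : Nontrivial (ZMod (p ^ l)) :=
    ZMod.nontrivial_iff.2 (Nat.one_lt_pow hl (Fact.out : p.Prime).one_lt).ne'
  .of_surjective' (PadicInt.toZModPow l) (ZMod.ringHom_surjective _)

end LocalRing

/-- The number of solutions `x` of `d * x ^ 2 = c` in the ring `R` (`0` if there are infinitely
many). For `R = ZMod (p ^ l)`, `d = Δ` and `c = p ^ (2 * T)` this is `N_{T,l}`. -/
noncomputable def cardMulSqEq (R : Type*) [CommRing R] (d c : R) : ℕ :=
  Nat.card {x : R // d * x ^ 2 = c}

section Ring

variable {R : Type*} [CommRing R] {d : R}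

theorem mul_sq_eq_zero_iff_of_isUnit [IsReduced R] (hd : IsUnit d) {x : R} :
    d * x ^ 2 = 0 ↔ x = 0 := by
  rw [hd.mul_right_eq_zero, pow_eq_zero_iff two_ne_zero]

theorem cardMulSqEq_of_subsingleton [Subsingleton R] (d c : R) : cardMulSqEq R d c = 1 :=
  have : Unique {x : R // d * x ^ 2 = c} :=
    ⟨⟨⟨0, Subsingleton.elim _ _⟩⟩, fun _ => Subsingleton.elim _ _⟩
  Nat.card_unique

theorem cardMulSqEq_zero_of_isUnit [IsReduced R] (hd : IsUnit d) : cardMulSqEq R d 0 = 1 := by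
  simp only [cardMulSqEq, mul_sq_eq_zero_iff_of_isUnit hd, Nat.card_unique]

open Classical in
theorem cardMulSqEq_one_of_isLocalRing [IsLocalRing R] (h2 : IsUnit (2 : R)) (d : R) :
    cardMulSqEq R d 1 = if ∃ x, d * x ^ 2 = 1 then 2 else 0 := by
  split_ifs with h
  · obtain ⟨y, hy⟩ := h
    have hd_unit : IsUnit d := .of_mul_eq_one _ hy
    have hy_unit : IsUnit y := (isUnit_pow_iff two_ne_zero).1 (.of_mul_eq_one_right _ hy)
    have hy_ne : y ≠ -y := fun h =>
      (h2.mul hy_unit).ne_zero (by rw [two_mul, ← sub_neg_eq_add, sub_eq_zero]; exact h)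
    have hsolutions : {x : R | d * x ^ 2 = 1} = {y, -y} := by
      ext x
      refine ⟨fun hx => ?_, by rintro (rfl | rfl) <;> simpa using hy⟩
      exact eq_or_eq_neg_of_sq_eq_sq_of_isUnit h2 hy_unit
        (hd_unit.mul_left_cancel (hx.trans hy.symm))
    exact (congrArg Set.ncard hsolutions).trans (Set.ncard_pair hy_ne)
  · exact Nat.card_eq_zero.2 (.inl ⟨fun x => h ⟨x, x.2⟩⟩)

end Ring

section ZMod

theorem isSquare_iff_exists_mul_sq_eq_one {M : Type*} [CommMonoid M] {d : M} (hd : IsUnit d) :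
    IsSquare d ↔ ∃ x, d * x ^ 2 = 1 := by
  constructor
  · rintro ⟨r, rfl⟩
    obtain ⟨s, hrs⟩ := (isUnit_of_mul_isUnit_left hd).exists_right_inv
    exact ⟨s, by rw [← sq, ← mul_pow, hrs, one_pow]⟩
  · rintro ⟨x, hx⟩
    exact ⟨d * x, by rw [mul_mul_mul_comm, ← sq x, mul_assoc, hx, mul_one]⟩

theorem isUnit_intCast_zmod_of_not_dvd {p : ℕ} [Fact p.Prime] {d : ℤ} (hd : ¬ (p : ℤ) ∣ d) :
    IsUnit (d : ZMod p) :=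
  .mk0 _ fun h => hd ((ZMod.intCast_zmod_eq_zero_iff_dvd d p).1 h)

theorem zmod_mul_sq_eq_iff_dvd (n : ℕ) (d c x : ℤ) :
    (d : ZMod n) * x ^ 2 = c ↔ (n : ℤ) ∣ d * x ^ 2 - c := by
  rw [← ZMod.intCast_zmod_eq_zero_iff_dvd, ← sub_eq_zero]
  push_cast
  rfl

theorem exists_zmod_mul_sq_eq_iff (n : ℕ) (d c : ℤ) :
    (∃ x : ZMod n, d * x ^ 2 = c) ↔ ∃ x : ℤ, (n : ℤ) ∣ d * x ^ 2 - c := by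
  rw [ZMod.intCast_surjective.exists]
  simp only [zmod_mul_sq_eq_iff_dvd]

-- If `d * y ^ 2 ≡ 1` modulo `n`, then `(d * y ^ 2) ^ (n ^ l) ≡ 1` modulo `n ^ (l + 1)`, and the
-- left side is `d` times a square because `n ^ l` is odd.
theorem exists_zmod_pow_mul_sq_eq_one_iff {n : ℕ} (hn : Odd n) (d : ℤ) (l : ℕ) :
    (∃ x : ZMod (n ^ (l + 1)), d * x ^ 2 = 1) ↔ ∃ x : ZMod n, d * x ^ 2 = 1 := by
  have hiff (m : ℕ) := exists_zmod_mul_sq_eq_iff m d 1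
  simp only [Int.cast_one] at hiff
  rw [hiff, hiff]
  constructor
  · rintro ⟨x, hx⟩
    exact ⟨x, (Int.natCast_dvd_natCast.2 (dvd_pow_self n l.succ_ne_zero)).trans hx⟩
  · rintro ⟨y, hy⟩
    obtain ⟨k, hk⟩ := hn.pow (n := l)
    refine ⟨d ^ k * y ^ n ^ l, ?_⟩
    have hpow : (d * y ^ 2) ^ n ^ l = d * (d ^ k * y ^ n ^ l) ^ 2 := by
      rw [mul_pow, ← pow_mul, mul_comm 2, pow_mul]
      nth_rw 1 [hk]
      ring
    have hdvd := dvd_sub_pow_of_dvd_sub hy l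
    rwa [one_pow, hpow, ← Nat.cast_pow] at hdvd

open Classical in
theorem cardMulSqEq_zmod_prime_pow_one {p : ℕ} (hp : p.Prime) (hp2 : p ≠ 2) {d : ℤ}
    (hd : ¬ (p : ℤ) ∣ d) (l : ℕ) :
    cardMulSqEq (ZMod (p ^ (l + 1))) d 1 = if IsSquare (d : ZMod p) then 2 else 0 := by
  have : Fact p.Prime := ⟨hp⟩
  have := isLocalRing_zmod_prime_pow p l.succ_ne_zero
  have hodd : Odd p := hp.odd_of_ne_two hp2
  have h2 : IsUnit (2 : ZMod (p ^ (l + 1))) := by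
    exact_mod_cast (ZMod.isUnit_iff_coprime 2 _).2 (Nat.coprime_two_left.2 hodd.pow)
  simp only [cardMulSqEq_one_of_isLocalRing h2, exists_zmod_pow_mul_sq_eq_one_iff hodd,
    isSquare_iff_exists_mul_sq_eq_one (isUnit_intCast_zmod_of_not_dvd hd)]

theorem cardMulSqEq_zmod_eq_count (n : ℕ) [NeZero n] (d c : ℤ) :
    cardMulSqEq (ZMod n) d c = Nat.count (fun x : ℕ => (n : ℤ) ∣ d * (x : ℤ) ^ 2 - c) n := by
  rw [cardMulSqEq, natCard_zmod_subtype_eq_count]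
  simp only [← zmod_mul_sq_eq_iff_dvd, Int.cast_natCast]

theorem periodic_dvd_mul_sq_sub (n : ℕ) (d c : ℤ) :
    Periodic (fun x : ℕ => (n : ℤ) ∣ d * (x : ℤ) ^ 2 - c) n := fun x => by
  simp only [← zmod_mul_sq_eq_iff_dvd, Nat.cast_add, Int.cast_add, Int.cast_natCast,
    ZMod.natCast_self, add_zero]

theorem dvd_of_dvd_mul_sq_of_squarefree {n d x : ℤ} (hn : Squarefree n) (hd : IsCoprime n d)
    (h : n ∣ d * x ^ 2) : n ∣ x :=
  (hn.dvd_pow_iff_dvd two_ne_zero).1 (hd.dvd_of_dvd_mul_left h)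

theorem cardMulSqEq_zmod_sq_mul {n : ℕ} (hn : Squarefree n) {d : ℤ} (hd : IsCoprime (n : ℤ) d)
    (m : ℕ) [NeZero m] (c : ℤ) :
    cardMulSqEq (ZMod (n ^ 2 * m)) d ((n ^ 2 * c : ℤ) : ZMod (n ^ 2 * m)) =
      n * cardMulSqEq (ZMod m) d c := by
  have : NeZero n := ⟨hn.ne_zero⟩
  have hn0 : (n : ℤ) ≠ 0 := NeZero.ne _
  have hdvd (x : ℕ) (hx : ((n ^ 2 * m : ℕ) : ℤ) ∣ d * (x : ℤ) ^ 2 - n ^ 2 * c) : n ∣ x := by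
    have hnx : (n : ℤ) ∣ d * (x : ℤ) ^ 2 - n ^ 2 * c :=
      Dvd.dvd.trans ⟨n * m, by push_cast; ring⟩ hx
    rw [dvd_sub_left ⟨n * c, by ring⟩] at hnx
    exact Int.natCast_dvd_natCast.1
      (dvd_of_dvd_mul_sq_of_squarefree (Int.squarefree_natCast.2 hn) hd hnx)
  have hscale (y : ℕ) : ((n ^ 2 * m : ℕ) : ℤ) ∣ d * ((n * y : ℕ) : ℤ) ^ 2 - n ^ 2 * c ↔
      (m : ℤ) ∣ d * (y : ℤ) ^ 2 - c := by
    have hfactor : d * ((n * y : ℕ) : ℤ) ^ 2 - n ^ 2 * c = n ^ 2 * (d * (y : ℤ) ^ 2 - c) := by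
      push_cast
      ring
    rw [hfactor, Nat.cast_mul, Nat.cast_pow, mul_dvd_mul_iff_left (pow_ne_zero 2 hn0)]
  calc cardMulSqEq (ZMod (n ^ 2 * m)) d ((n ^ 2 * c : ℤ) : ZMod (n ^ 2 * m))
      = Nat.count (fun x : ℕ => ((n ^ 2 * m : ℕ) : ℤ) ∣ d * (x : ℤ) ^ 2 - n ^ 2 * c)
          (n * (n * m)) := by
        rw [cardMulSqEq_zmod_eq_count, show n * (n * m) = n ^ 2 * m by ring]
    _ = Nat.count (fun y : ℕ => (m : ℤ) ∣ d * (y : ℤ) ^ 2 - c) (n * m) := by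
        simp only [count_mul_of_imp_dvd hn.ne_zero hdvd, hscale]
    _ = n * cardMulSqEq (ZMod m) d c := by
        rw [count_mul_of_periodic (periodic_dvd_mul_sq_sub m d c), cardMulSqEq_zmod_eq_count]

end ZMod

section LocalSeries

variable {K : Type*} [Field K] {p : ℕ} {Δ : ℤ} {a z : K}

/-- The general term of the double series, with indices `q = (T, l)`. The quotient by `p ^ l` makes
the solution count `N_{T,l}` a density. -/
noncomputable def localSeriesTerm (p : ℕ) (Δ : ℤ) (a z : K) (q : ℕ × ℕ) : K :=
  a ^ q.1 * z ^ q.2 *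
    ((cardMulSqEq (ZMod (p ^ q.2)) Δ ((p ^ (2 * q.1) : ℕ) : ZMod (p ^ q.2)) : K) / p ^ q.2)

theorem localSeriesTerm_right_zero (T : ℕ) : localSeriesTerm p Δ a z (T, 0) = a ^ T := by
  have : Subsingleton (ZMod (p ^ 0)) := ZMod.subsingleton_iff.2 (pow_zero p)
  rw [localSeriesTerm, cardMulSqEq_of_subsingleton]
  simp

theorem localSeriesTerm_succ_one (hp : p.Prime) (hΔ : ¬ (p : ℤ) ∣ Δ) (T : ℕ) :
    localSeriesTerm p Δ a z (T + 1, 1) = a * (z / p) * a ^ T := by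
  have : Fact p.Prime := ⟨hp⟩
  have hcard : cardMulSqEq (ZMod (p ^ 1)) Δ ((p ^ (2 * (T + 1)) : ℕ) : ZMod (p ^ 1)) = 1 := by
    rw [pow_one, Nat.cast_pow, ZMod.natCast_self, zero_pow (by omega),
      cardMulSqEq_zero_of_isUnit (isUnit_intCast_zmod_of_not_dvd hΔ)]
  rw [localSeriesTerm, hcard]
  ring

open Classical in
theorem localSeriesTerm_zero_succ (hp : p.Prime) (hp2 : p ≠ 2) (hΔ : ¬ (p : ℤ) ∣ Δ) {ε : K}
    (hε : ε = if IsSquare (Δ : ZMod p) then 1 else -1) (l : ℕ) :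
    localSeriesTerm p Δ a z (0, l + 1) = (1 + ε) * (z / p) * (z / p) ^ l := by
  have hcard : (cardMulSqEq (ZMod (p ^ (l + 1))) Δ 1 : K) = 1 + ε := by
    rw [cardMulSqEq_zmod_prime_pow_one hp hp2 hΔ, hε]
    split_ifs <;> norm_num
  rw [localSeriesTerm, mul_zero, pow_zero, pow_zero, Nat.cast_one, hcard]
  ring

theorem localSeriesTerm_succ_add_two (hp : p.Prime) (hpK : (p : K) ≠ 0) (hΔ : ¬ (p : ℤ) ∣ Δ)
    (T l : ℕ) :
    localSeriesTerm p Δ a z (T + 1, l + 2) =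
      a * (z ^ 2 / p) * localSeriesTerm p Δ a z (T, l) := by
  have : NeZero p := ⟨hp.ne_zero⟩
  have hcop : IsCoprime (p : ℤ) Δ := (Nat.prime_iff_prime_int.1 hp).coprime_iff_not_dvd.2 hΔ
  have hcard : cardMulSqEq (ZMod (p ^ (l + 2))) Δ ((p ^ (2 * (T + 1)) : ℕ) : ZMod (p ^ (l + 2))) =
      p * cardMulSqEq (ZMod (p ^ l)) Δ ((p ^ (2 * T) : ℕ) : ZMod (p ^ l)) := by
    have h := cardMulSqEq_zmod_sq_mul hp.prime.squarefree hcop (p ^ l) (p ^ (2 * T))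
    rw [← pow_add, ← pow_add] at h
    rw [add_comm l 2, mul_add_one, add_comm (2 * T) 2]
    exact_mod_cast h
  simp only [localSeriesTerm, hcard]
  push_cast
  field_simp
  ring

theorem boundary_sum_eq {ε w : K} (hε : ε ^ 2 = 1) (ha : 1 - a ≠ 0) (hw : 1 - w ≠ 0)
    (hεw : 1 - ε * w ≠ 0) :
    1 + (1 + ε) * w * (1 - w)⁻¹ + (a * (1 - a)⁻¹ + a * w * (1 - a)⁻¹) =
      (1 - w ^ 2) * (1 - ε * a * w) / ((1 - a) * (1 - w) * (1 - ε * w)) := by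
  field_simp
  linear_combination (w ^ 2 * (a - 1)) * hε

end LocalSeries

theorem abs_div_natCast_lt_one {x : ℝ} (hx : |x| < 1) {n : ℕ} (hn : n ≠ 0) : |x / n| < 1 := by
  rw [abs_div, Nat.abs_cast]
  exact (div_le_self (abs_nonneg x) (Nat.one_le_cast.2 (Nat.one_le_iff_ne_zero.2 hn))).trans_lt hx

open Classical in
theorem stmt_6_general {K : Type*} [NormedField K] [CompleteSpace K] {p : ℕ} (hp : p.Prime)
    (hp2 : p ≠ 2) (hpK : (p : K) ≠ 0) {Δ : ℤ} (hΔ : ¬ (p : ℤ) ∣ Δ) {ε : K}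
    (hε : ε = if IsSquare (Δ : ZMod p) then 1 else -1) {a z w u : K} (hw : w = z / p)
    (hu : u = z ^ 2 / p) (ha_lt : ‖a‖ < 1) (hw_lt : ‖w‖ < 1) (hau_lt : ‖a * u‖ < 1) :
    HasSum (localSeriesTerm p Δ a z)
      ((1 - w ^ 2) * (1 - ε * a * w) / ((1 - a) * (1 - w) * (1 - ε * w) * (1 - a * u))) := by
  have hε_cases : ε = 1 ∨ ε = -1 := by rw [hε]; split_ifs <;> simp
  have hεw_lt : ‖ε * w‖ < 1 := by rcases hε_cases with rfl | rfl <;> simpa using hw_lt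
  have one_sub_ne_zero {x : K} (hx : ‖x‖ < 1) : 1 - x ≠ 0 :=
    sub_ne_zero.2 fun h => by simp [← h] at hx
  have hgeom (c : K) {x : K} (hx : ‖x‖ < 1) : Summable fun n : ℕ => ‖c * x ^ n‖ := by
    simpa only [norm_mul] using (summable_norm_geometric_of_norm_lt_one hx).mul_left ‖c‖
  have hrow := localSeriesTerm_zero_succ (a := a) (z := z) hp hp2 hΔ hε
  have hcol₀ (T : ℕ) : localSeriesTerm p Δ a z (T + 1, 0) = a * a ^ T := by
    rw [localSeriesTerm_right_zero, pow_succ']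
  have hcol₁ := localSeriesTerm_succ_one (a := a) (z := z) hp hΔ
  have hshift := localSeriesTerm_succ_add_two (a := a) (z := z) hp hpK hΔ
  rw [← hw] at hrow hcol₁
  rw [← hu] at hshift
  have hrow_norm : Summable fun l => ‖localSeriesTerm p Δ a z (0, l)‖ :=
    (summable_nat_add_iff 1).1 (by simpa only [hrow] using hgeom _ hw_lt)
  have hsum := hasSum_of_diagonalShift hau_lt hshift hrow_norm
    (by simpa only [hcol₀] using hgeom _ ha_lt) (by simpa only [hcol₁] using hgeom _ ha_lt)
  rw [hrow_norm.of_norm.tsum_eq_zero_add, localSeriesTerm_right_zero, pow_zero] at hsum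
  simp only [hrow, hcol₀, hcol₁, tsum_mul_left, tsum_geometric_of_norm_lt_one, ha_lt, hw_lt] at hsum
  rwa [boundary_sum_eq (by rcases hε_cases with rfl | rfl <;> norm_num) (one_sub_ne_zero ha_lt)
    (one_sub_ne_zero hw_lt) (one_sub_ne_zero hεw_lt), inv_mul_eq_div, div_div] at hsum

open Classical in
theorem stmt_6 (p : ℕ) (hp : p.Prime) (hp2 : p ≠ 2) (Δ : ℤ) (hΔ : ¬ (p : ℤ) ∣ Δ)
    (ε : ℝ) (hε : ε = if IsSquare (Δ : ZMod p) then 1 else -1)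
    (a z : ℝ) (ha : |a| < 1) (hz : |z| < 1)
    (w u : ℝ) (hw : w = z / p) (hu : u = z ^ 2 / p) :
    HasSum
      (fun Tℓ : ℕ × ℕ => a ^ Tℓ.1 * z ^ Tℓ.2 *
        ((Nat.card {x : ZMod (p ^ Tℓ.2) //
            (Δ : ZMod (p ^ Tℓ.2)) * x ^ 2 = ((p ^ (2 * Tℓ.1) : ℕ) : ZMod (p ^ Tℓ.2))} : ℝ)
          / p ^ Tℓ.2))
      ((1 - w ^ 2) * (1 - ε * a * w) / ((1 - a) * (1 - w) * (1 - ε * w) * (1 - a * u))) := by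
  have hw_lt : |w| < 1 := hw ▸ abs_div_natCast_lt_one hz hp.ne_zero
  have hu_lt : |u| < 1 :=
    hu ▸ abs_div_natCast_lt_one (by rw [abs_pow]; exact pow_lt_one₀ (abs_nonneg z) hz two_ne_zero)
      hp.ne_zero
  have hau_lt : |a * u| < 1 := by
    rw [abs_mul]
    exact mul_lt_one_of_nonneg_of_lt_one_left (abs_nonneg a) ha hu_lt.le
  exact stmt_6_general hp hp2 (Nat.cast_ne_zero.2 hp.ne_zero) hΔ hε hw hu ha hw_lt hau_lt
end

section
/- Let p be an odd prime and Δ an integer not divisible by p whose image in ℤ/pℤ is not a square. Let ℓ ≥ 1 and let η be a unit of ℤ/p^ℓℤ. Then the number of pairs (x, y) ∈ (ℤ/p^ℓℤ)² with x² − Δ̄·y² = η is exactly p^ℓ + p^{ℓ−1}. -/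
/-!
Let `R` be a finite local ring with maximal ideal `m`, and let `S = R[ω]` with `ω² = a + bω`, where
`X² - bX - a` has no root in the residue field. An element of `S` is a unit iff its norm is, and
this fails exactly on `m × m`, so `|Sˣ| = |R|² - |m|² = (|R| + |m|) |Rˣ|`. It remains to see that
`N : Sˣ → Rˣ` is surjective, as then all its fibres have `|R| + |m|` elements. Norms are surjective
for finite fields, which reduces this to `1 + m`. Pick `θ ∈ S` whose trace is a unit: the map
`s ↦ N(1 + sθ) - 1 = s Tr θ + s² N θ` from `m` to itself is injective, hence bijective.
-/

section Counting

lemma card_units_add_card_nonunits (M : Type*) [Monoid M] [Finite M] :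
    Nat.card Mˣ + Nat.card (nonunits M) = Nat.card M := by
  have card_units : Nat.card Mˣ = Nat.card {x : M // IsUnit x} :=
    Nat.card_congr ⟨fun u ↦ ⟨u, u.isUnit⟩, fun x ↦ x.2.unit, fun _ ↦ Units.ext rfl, fun _ ↦ rfl⟩
  classical
  rw [card_units, ← Nat.card_congr (Equiv.sumCompl (IsUnit : M → Prop)), Nat.card_sum]
  rfl

lemma card_fiber_mul_card_of_surjective {G H : Type*} [Group G] [Group H] {f : G →* H}
    (hf : Function.Surjective f) (h : H) :
    Nat.card (f ⁻¹' {h}) * Nat.card H = Nat.card G := by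
  rw [Nat.card_congr (MonoidHom.fiberEquivKerOfSurjective hf h), ← f.ker.card_mul_index,
    Subgroup.index_ker, f.range_eq_top.mpr hf, Subgroup.card_top]

lemma card_preimage_units_map {M N : Type*} [Monoid M] [Monoid N] (f : M →* N) [IsLocalHom f]
    (u : Nˣ) : Nat.card (Units.map f ⁻¹' {u}) = Nat.card {x : M // f x = u} := by
  have isUnit (x : {x : M // f x = u}) : IsUnit x.1 :=
    isUnit_of_map_unit f x.1 (by rw [x.2]; exact u.isUnit)
  exact Nat.card_congr ⟨fun v ↦ ⟨v.1, congrArg Units.val v.2⟩, fun x ↦ ⟨(isUnit x).unit,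
    Units.ext x.2⟩, fun _ ↦ Subtype.ext (Units.ext rfl), fun _ ↦ rfl⟩

end Counting

section FiniteField

open QuadraticAlgebra

variable {K : Type*} [Field K] [Finite K] {a b : K}

lemma quadraticAlgebra_norm_surjective [Fact (∀ r : K, r ^ 2 ≠ a + b * r)] :
    Function.Surjective (norm : QuadraticAlgebra K a b →* K) := by
  have : Finite (QuadraticAlgebra K a b) := .of_equiv _ (equivProd a b).symm
  intro c
  obtain ⟨z, hz⟩ := FiniteField.norm_surjective K (QuadraticAlgebra K a b) c
  exact ⟨z, by rw [← hz, ← det_toLinearMap_eq_norm]; rfl⟩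

lemma two_ne_zero_or_ne_zero_of_forall_sq_ne (h : ∀ r : K, r ^ 2 ≠ a + b * r) :
    (2 : K) ≠ 0 ∨ b ≠ 0 := by
  by_contra! ⟨h2, rfl⟩
  have : CharP K 2 := CharTwo.of_one_ne_zero_of_two_eq_zero one_ne_zero h2
  obtain ⟨r, rfl⟩ := FiniteField.isSquare_of_char_two (ringChar.eq K 2) a
  exact h r (by ring)

end FiniteField

section NormExpansion

open QuadraticAlgebra

lemma norm_one_add_smul {R : Type*} [CommRing R] {a b : R} (s : R) (z : QuadraticAlgebra R a b) :
    norm (1 + s • z) = 1 + (trace z * s + norm z * s ^ 2) := by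
  simp only [norm_def, trace_def, re_add, im_add, re_one, im_one, re_smul, im_smul, smul_eq_mul,
    zero_add]
  ring

end NormExpansion

section LocalRing

open IsLocalRing QuadraticAlgebra

variable {R : Type*} [CommRing R] [IsLocalRing R]

lemma not_isSquare_residue_of_not_isSquare_map {K : Type*} [Field K] (f : R →+* K) [IsLocalHom f]
    {x : R} (hx : ¬ IsSquare (f x)) : ¬ IsSquare (residue R x) :=
  fun h ↦ hx (by simpa using h.map (ResidueField.lift f))

lemma exists_mem_maximalIdeal_mul_add_mul_sq_eq [Finite R] {t : R} (ht : IsUnit t) (n : R) {x : R}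
    (hx : x ∈ maximalIdeal R) : ∃ s ∈ maximalIdeal R, t * s + n * s ^ 2 = x := by
  let g : maximalIdeal R → maximalIdeal R := fun s ↦
    ⟨t * s + n * s ^ 2, by
      rw [sq, ← mul_assoc, ← add_mul]; exact Ideal.mul_mem_left _ _ s.2⟩
  suffices Function.Injective g by
    obtain ⟨s, hs⟩ := Finite.surjective_of_injective this ⟨x, hx⟩
    exact ⟨s, s.2, congrArg Subtype.val hs⟩
  intro s s' hss'
  have factored : (t + n * (s + s')) * ((s : R) - s') = 0 := by
    linear_combination congrArg Subtype.val hss'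
  have unit_factor : IsUnit (t + n * ((s : R) + s')) := by
    rw [← residue_ne_zero_iff_isUnit] at ht ⊢
    simpa [(residue_eq_zero_iff _).mpr s.2, (residue_eq_zero_iff _).mpr s'.2] using ht
  exact Subtype.ext (sub_eq_zero.mp (unit_factor.mul_right_eq_zero.mp factored))

variable {a b : R}

lemma residue_norm (z : QuadraticAlgebra R a b) :
    residue R (norm z) =
      norm (⟨residue R z.re, residue R z.im⟩ : QuadraticAlgebra _ (residue R a) (residue R b)) := by
  simp [norm_def]

variable (h : ∀ r : ResidueField R, r ^ 2 ≠ residue R a + residue R b * r)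
include h

lemma mem_nonunits_quadraticAlgebra_iff (z : QuadraticAlgebra R a b) :
    z ∈ nonunits (QuadraticAlgebra R a b) ↔ z.re ∈ nonunits R ∧ z.im ∈ nonunits R := by
  have := Fact.mk h
  rw [mem_nonunits_iff, isUnit_iff_norm_isUnit, ← mem_nonunits_iff]
  simp only [← mem_maximalIdeal, ← residue_eq_zero_iff, residue_norm, norm_eq_zero_iff_eq_zero,
    QuadraticAlgebra.ext_iff, re_zero, im_zero]

lemma card_nonunits_quadraticAlgebra :
    Nat.card (nonunits (QuadraticAlgebra R a b)) = Nat.card (nonunits R) ^ 2 := by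
  rw [sq, ← Nat.card_prod]
  exact Nat.card_congr (((equivProd a b).subtypeEquiv (mem_nonunits_quadraticAlgebra_iff h)).trans
    Equiv.subtypeProdEquivProd)

lemma exists_isUnit_trace [Finite (ResidueField R)] :
    ∃ z : QuadraticAlgebra R a b, IsUnit (trace z) := by
  rcases two_ne_zero_or_ne_zero_of_forall_sq_ne h with h2 | hb
  · exact ⟨1, by rwa [trace_one, ← residue_ne_zero_iff_isUnit, map_ofNat]⟩
  · exact ⟨omega, by rwa [trace_omega, ← residue_ne_zero_iff_isUnit]⟩

variable [Finite R]

lemma exists_norm_eq_of_sub_one_mem {x : R} (hx : x - 1 ∈ maximalIdeal R) :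
    ∃ z : QuadraticAlgebra R a b, norm z = x := by
  have := Finite.of_surjective _ (residue_surjective (R := R))
  obtain ⟨θ, hθ⟩ := exists_isUnit_trace h
  obtain ⟨s, -, hs⟩ := exists_mem_maximalIdeal_mul_add_mul_sq_eq hθ (norm θ) hx
  exact ⟨1 + s • θ, by rw [norm_one_add_smul, hs, add_sub_cancel]⟩

lemma exists_norm_eq_of_isUnit {u : R} (hu : IsUnit u) :
    ∃ z : QuadraticAlgebra R a b, norm z = u := by
  have := Fact.mk h
  have := Finite.of_surjective _ (residue_surjective (R := R))
  obtain ⟨⟨x', y'⟩, norm_eq_residue⟩ :=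
    quadraticAlgebra_norm_surjective (a := residue R a) (b := residue R b) (residue R u)
  obtain ⟨x, rfl⟩ := residue_surjective x'
  obtain ⟨y, rfl⟩ := residue_surjective y'
  let z : QuadraticAlgebra R a b := ⟨x, y⟩
  have residue_norm_z : residue R (norm z) = residue R u := by rw [residue_norm, norm_eq_residue]
  obtain ⟨v, hv⟩ : IsUnit (norm z) := by
    rwa [← residue_ne_zero_iff_isUnit, residue_norm_z, residue_ne_zero_iff_isUnit]
  have quotient_mem : ↑v⁻¹ * u - 1 ∈ maximalIdeal R := by
    rw [← residue_eq_zero_iff, map_sub, map_mul, ← residue_norm_z, ← hv, ← map_mul, v.inv_mul,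
      sub_self]
  obtain ⟨w, hw⟩ := exists_norm_eq_of_sub_one_mem h quotient_mem
  exact ⟨z * w, by rw [map_mul, hw, ← hv, v.mul_inv_cancel_left]⟩

lemma units_map_norm_surjective :
    Function.Surjective (Units.map (norm : QuadraticAlgebra R a b →* R)) := by
  intro u
  obtain ⟨z, hz⟩ := exists_norm_eq_of_isUnit h u.isUnit
  obtain ⟨v, rfl⟩ : IsUnit z := isUnit_iff_norm_isUnit.mpr (hz ▸ u.isUnit)
  exact ⟨v, Units.ext hz⟩

lemma card_norm_eq (η : Rˣ) :
    Nat.card {z : QuadraticAlgebra R a b // norm z = η} = Nat.card R + Nat.card (nonunits R) := by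
  have : IsLocalHom (norm : QuadraticAlgebra R a b →* R) := ⟨fun _ ↦ isUnit_iff_norm_isUnit.mpr⟩
  have : Finite (QuadraticAlgebra R a b) := .of_equiv _ (equivProd a b).symm
  rw [← card_preimage_units_map norm η]
  have card_fiber := card_fiber_mul_card_of_surjective (units_map_norm_surjective h) η
  have card_R := card_units_add_card_nonunits R
  have card_S := card_units_add_card_nonunits (QuadraticAlgebra R a b)
  rw [card_nonunits_quadraticAlgebra h, Nat.card_congr (equivProd a b), Nat.card_prod] at card_S
  apply Nat.eq_of_mul_eq_mul_right (Nat.card_pos (α := Rˣ))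
  rw [card_fiber]
  rw [← card_R] at card_S ⊢
  linarith

end LocalRing

section ZModPrimePow

variable {p ℓ : ℕ} [Fact p.Prime]

lemma isLocalRing_zmod_prime_pow_s7 (hℓ : ℓ ≠ 0) : IsLocalRing (ZMod (p ^ ℓ)) :=
  have : Fact (1 < p ^ ℓ) := ⟨Nat.one_lt_pow hℓ (Fact.out : p.Prime).one_lt⟩
  IsLocalRing.of_surjective' (PadicInt.toZModPow ℓ) (ZMod.ringHom_surjective _)

lemma card_nonunits_zmod_prime_pow (hℓ : ℓ ≠ 0) :
    Nat.card (nonunits (ZMod (p ^ ℓ))) = p ^ (ℓ - 1) := by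
  obtain ⟨k, rfl⟩ := Nat.exists_eq_succ_of_ne_zero hℓ
  have card_sum := card_units_add_card_nonunits (ZMod (p ^ (k + 1)))
  have prime : p.Prime := Fact.out
  have pow_split : p ^ k * (p - 1) + p ^ k = p ^ (k + 1) := by
    rw [← Nat.mul_succ, Nat.succ_eq_add_one, Nat.sub_add_cancel prime.one_le, pow_succ]
  rw [Nat.card_eq_fintype_card, ZMod.card_units_eq_totient, Nat.totient_prime_pow_succ prime,
    Nat.card_zmod] at card_sum
  exact Nat.add_left_cancel (card_sum.trans pow_split.symm)

end ZModPrimePow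

theorem stmt_7_general {R : Type*} [CommRing R] [IsLocalRing R] [Finite R] (a b : R)
    (h : ∀ r : IsLocalRing.ResidueField R,
      r ^ 2 ≠ IsLocalRing.residue R a + IsLocalRing.residue R b * r) (η : Rˣ) :
    Nat.card {xy : R × R // xy.1 ^ 2 + b * xy.1 * xy.2 - a * xy.2 ^ 2 = η}
      = Nat.card R + Nat.card (nonunits R) := by
  rw [← card_norm_eq h η]
  refine Nat.card_congr ((QuadraticAlgebra.equivProd a b).subtypeEquiv fun z ↦ ?_).symm
  rw [QuadraticAlgebra.norm_def, sq, sq, mul_assoc a]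
  rfl

theorem stmt_7 (p : ℕ) (hp : p.Prime) (hp2 : p ≠ 2) (Δ : ℤ) (hΔ : ¬ (p : ℤ) ∣ Δ)
    (hns : ¬ IsSquare (Δ : ZMod p)) (ℓ : ℕ) (hℓ : 1 ≤ ℓ) (η : (ZMod (p ^ ℓ))ˣ) :
    Nat.card {xy : ZMod (p ^ ℓ) × ZMod (p ^ ℓ) //
        xy.1 ^ 2 - (Δ : ZMod (p ^ ℓ)) * xy.2 ^ 2 = (η : ZMod (p ^ ℓ))}
      = p ^ ℓ + p ^ (ℓ - 1) := by
  have hℓ₀ : ℓ ≠ 0 := by lia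
  have := Fact.mk hp
  have := isLocalRing_zmod_prime_pow_s7 (p := p) hℓ₀
  have not_isSquare_residue : ¬ IsSquare (IsLocalRing.residue (ZMod (p ^ ℓ)) Δ) :=
    not_isSquare_residue_of_not_isSquare_map (ZMod.castHom (dvd_pow_self p hℓ₀) (ZMod p))
      (by rwa [map_intCast])
  have no_root (r : IsLocalRing.ResidueField (ZMod (p ^ ℓ))) :
      r ^ 2 ≠ IsLocalRing.residue _ (Δ : ZMod (p ^ ℓ)) + IsLocalRing.residue _ 0 * r := by
    intro hr
    exact not_isSquare_residue ⟨r, by simpa [sq] using hr.symm⟩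
  simpa [card_nonunits_zmod_prime_pow hℓ₀] using stmt_7_general (Δ : ZMod (p ^ ℓ)) 0 no_root η
end

section
/- Let p be an odd prime and Δ an integer not divisible by p whose image in ℤ/pℤ is not a square. Then for every ℓ ≥ 1 and every unit η of ℤ/p^ℓℤ there exist a, b ∈ ℤ/p^ℓℤ with a² − Δ̄·b² = η. -/
/-!
Modulo its nilradical a finite commutative ring is a product of finite fields, and over a finite
field `c * a ^ 2 + d * b ^ 2` represents everything by the pigeonhole principle. Representing a
unit `n` modulo the nilradical gives `m = c * a ^ 2 + d * b ^ 2` with `m - n` nilpotent. The form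
being homogeneous, it is enough to rescale `(a, b)` by a root `s` of `m * s ^ 2 = n`, and Newton's
iteration started at `s = 1` reaches one because the derivative `2 * m` is a unit.
-/

open Polynomial

theorem exists_mul_sq_add_mul_sq_eq_of_finite_field {K : Type*} [Field K] [Finite K] {c d : K}
    (hc : c ≠ 0) (hd : d ≠ 0) (n : K) : ∃ a b : K, c * a ^ 2 + d * b ^ 2 = n := by
  have := Fintype.ofFinite K
  by_cases hK : ringChar K = 2
  · obtain ⟨a, ha⟩ := FiniteField.isSquare_of_char_two hK (c⁻¹ * n)
    exact ⟨a, 0, by rw [sq, ← ha, mul_inv_cancel_left₀ hc]; ring⟩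
  · have hf : degree (C c * X ^ 2 + C 0 * X + C 0) = 2 := degree_quadratic hc
    have hg : degree (C d * X ^ 2 + C 0 * X + C (-n)) = 2 := degree_quadratic hd
    obtain ⟨a, b, hab⟩ := FiniteField.exists_root_sum_quadratic hf hg
      (FiniteField.odd_card_of_char_ne_two hK)
    simp only [eval_add, eval_mul, eval_C, eval_pow, eval_X] at hab
    exact ⟨a, b, by linear_combination hab⟩

theorem exists_mul_sq_add_mul_sq_eq_of_isReduced {R : Type*} [CommRing R] [Finite R] [IsReduced R]
    {c d : R} (hc : IsUnit c) (hd : IsUnit d) (n : R) : ∃ a b : R, c * a ^ 2 + d * b ^ 2 = n := by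
  let e := IsArtinianRing.equivPi R
  have solvable (I : MaximalSpectrum R) :
      ∃ a b : R ⧸ I.asIdeal, e c I * a ^ 2 + e d I * b ^ 2 = e n I := by
    let := Ideal.Quotient.field I.asIdeal
    have : Finite (R ⧸ I.asIdeal) := .of_surjective _ Ideal.Quotient.mk_surjective
    exact exists_mul_sq_add_mul_sq_eq_of_finite_field
      (hc.map (Ideal.Quotient.mk I.asIdeal)).ne_zero
      (hd.map (Ideal.Quotient.mk I.asIdeal)).ne_zero _
  choose a b hab using solvable
  refine ⟨e.symm a, e.symm b, e.injective ?_⟩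
  simp only [map_add, map_mul, map_pow, AlgEquiv.apply_symm_apply]
  exact funext hab

theorem exists_mul_sq_eq_of_isNilpotent_sub {R : Type*} [CommRing R] (h2 : IsUnit (2 : R))
    {m n : R} (hn : IsUnit n) (hmn : IsNilpotent (m - n)) : ∃ s : R, m * s ^ 2 = n := by
  have hm : IsUnit m := by
    simpa using hmn.isUnit_add_right_of_commute hn (Commute.all _ _)
  have hroot : IsNilpotent (aeval (1 : R) (C m * X ^ 2 - C n)) := by simpa using hmn
  have hderiv : IsUnit (aeval (1 : R) (derivative (C m * X ^ 2 - C n))) := by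
    simpa [one_add_one_eq_two] using hm.mul h2
  obtain ⟨s, ⟨-, hs⟩, -⟩ := existsUnique_nilpotent_sub_and_aeval_eq_zero hroot hderiv
  exact ⟨s, by simpa [sub_eq_zero] using hs⟩

theorem stmt_8_general {R : Type*} [CommRing R] [Finite (R ⧸ nilradical R)]
    (h2 : IsUnit (2 : R)) {c d n : R} (hc : IsUnit c) (hd : IsUnit d) (hn : IsUnit n) :
    ∃ a b : R, c * a ^ 2 + d * b ^ 2 = n := by
  let π := Ideal.Quotient.mk (nilradical R)
  have : IsReduced (R ⧸ nilradical R) :=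
    (Ideal.isRadical_iff_quotient_reduced _).mp (Ideal.radical_isRadical _)
  obtain ⟨a', b', hab⟩ := exists_mul_sq_add_mul_sq_eq_of_isReduced (hc.map π) (hd.map π) (π n)
  obtain ⟨a, rfl⟩ := Ideal.Quotient.mk_surjective a'
  obtain ⟨b, rfl⟩ := Ideal.Quotient.mk_surjective b'
  have hnil : IsNilpotent (c * a ^ 2 + d * b ^ 2 - n) := by
    rw [← mem_nilradical, ← Ideal.Quotient.eq]
    simpa only [map_add, map_mul, map_pow] using hab
  obtain ⟨s, hs⟩ := exists_mul_sq_eq_of_isNilpotent_sub h2 hn hnil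
  exact ⟨a * s, b * s, by linear_combination hs⟩

theorem isUnit_intCast_zmod_prime_pow {p : ℕ} (hp : p.Prime) {z : ℤ} (hz : ¬ (p : ℤ) ∣ z) (k : ℕ) :
    IsUnit (z : ZMod (p ^ k)) := by
  rw [ZMod.coe_int_isUnit_iff_isCoprime, Nat.cast_pow]
  exact ((Nat.prime_iff_prime_int.mp hp).coprime_iff_not_dvd.mpr hz).pow_left

theorem isUnit_two_zmod_prime_pow {p : ℕ} (hp : p.Prime) (hp2 : p ≠ 2) (k : ℕ) :
    IsUnit (2 : ZMod (p ^ k)) := by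
  have h : ¬ (p : ℤ) ∣ 2 := mod_cast mt (Nat.prime_dvd_prime_iff_eq hp Nat.prime_two).mp hp2
  exact_mod_cast isUnit_intCast_zmod_prime_pow hp h k

theorem stmt_8 (p : ℕ) (hp : p.Prime) (hp2 : p ≠ 2) (Δ : ℤ) (hΔ : ¬ (p : ℤ) ∣ Δ)
    (hns : ¬ IsSquare (Δ : ZMod p)) (ℓ : ℕ) (hℓ : 1 ≤ ℓ) (η : (ZMod (p ^ ℓ))ˣ) :
    ∃ a b : ZMod (p ^ ℓ), a ^ 2 - (Δ : ZMod (p ^ ℓ)) * b ^ 2 = (η : ZMod (p ^ ℓ)) := by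
  have : NeZero (p ^ ℓ) := ⟨pow_ne_zero ℓ hp.ne_zero⟩
  simpa [sub_eq_add_neg] using stmt_8_general (isUnit_two_zmod_prime_pow hp hp2 ℓ) isUnit_one
    (isUnit_intCast_zmod_prime_pow hp hΔ ℓ).neg η.isUnit
end

section
/- Let p be a prime, u an integer not divisible by p, and N, ℓ natural numbers with N < ℓ. Then the number of pairs (x, y) ∈ (ℤ/p^ℓℤ)² with x·y equal to the image of p^N·u in ℤ/p^ℓℤ is exactly (N+1)·(p^ℓ − p^{ℓ−1}). -/
/-!
For fixed `x`, the congruence `x * y = c` in `ZMod n` is solvable iff `d = gcd(n, x)` divides `c`,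
and then its solutions form a coset of the annihilator of `x`, which has `d` elements. Since `x`
has additive order `n / d`, there are `φ(n / d)` such `x`, so the number of pairs is
`∑ d * φ(n / d)` over the divisors `d` of `gcd(n, c)`. For `n = p ^ ℓ` and `c = p ^ N * u` these are
the `N + 1` powers `p ^ k` with `k ≤ N`, and each of them contributes
`p ^ k * φ(p ^ (ℓ - k)) = φ(p ^ ℓ)`.
-/

section ProductCongruence

variable {n : ℕ}

theorem intCast_zmod_dvd_intCast_iff (a c : ℤ) :
    (a : ZMod n) ∣ (c : ZMod n) ↔ (Int.gcd n a : ℤ) ∣ c := by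
  rw [Int.coe_gcd, gcd_dvd_iff_exists]
  constructor
  · rintro ⟨y, hy⟩
    obtain ⟨y, rfl⟩ := ZMod.intCast_surjective y
    rw [← Int.cast_mul, eq_comm, ZMod.intCast_eq_intCast_iff_dvd_sub] at hy
    obtain ⟨t, ht⟩ := hy
    exact ⟨t, y, by linear_combination ht⟩
  · rintro ⟨t, y, rfl⟩
    exact ⟨y, by simp⟩

variable [NeZero n]

theorem zmod_dvd_intCast_iff (x : ZMod n) (c : ℤ) :
    x ∣ (c : ZMod n) ↔ n.gcd x.val ∣ Int.gcd n c := by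
  have hx : ((x.val : ℤ) : ZMod n) = x := by simp
  rw [← hx, intCast_zmod_dvd_intCast_iff, hx, Int.gcd_natCast_natCast, Int.dvd_gcd_iff]
  exact (and_iff_right (Int.natCast_dvd_natCast.2 (Nat.gcd_dvd_left n x.val))).symm

theorem card_zmod_mul_eq_of_dvd {x c : ZMod n} (h : x ∣ c) :
    Nat.card {y : ZMod n // x * y = c} = n.gcd x.val := by
  obtain ⟨y₀, rfl⟩ := h
  have fiberEquiv : {y : ZMod n // x * y = x * y₀} ≃ (nsmulAddMonoidHom (α := ZMod n) x.val).ker :=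
    (Equiv.subtypeEquivRight fun y ↦ by simp [nsmul_eq_mul]).trans
      ((nsmulAddMonoidHom x.val).fiberEquivKer y₀)
  rw [Nat.card_congr fiberEquiv, IsAddCyclic.card_nsmulAddMonoidHom_ker, Nat.card_zmod]

theorem card_zmod_mul_eq_intCast (x : ZMod n) (c : ℤ) :
    Nat.card {y : ZMod n // x * y = c} =
      if n.gcd x.val ∣ Int.gcd n c then n.gcd x.val else 0 := by
  split_ifs with h
  · exact card_zmod_mul_eq_of_dvd ((zmod_dvd_intCast_iff x c).2 h)
  · have : IsEmpty {y : ZMod n // x * y = c} :=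
      ⟨fun y ↦ h ((zmod_dvd_intCast_iff x c).1 ⟨y, y.2.symm⟩)⟩
    exact Nat.card_of_isEmpty

theorem card_zmod_gcd_val_eq {d : ℕ} (hd : d ∣ n) :
    Finset.card {x : ZMod n | n.gcd x.val = d} = (n / d).totient := by
  have order_eq_iff (x : ZMod n) : addOrderOf x = n / d ↔ n.gcd x.val = d := by
    have order_eq : addOrderOf x = n / n.gcd x.val := by
      simpa using ZMod.addOrderOf_coe x.val (NeZero.ne n)
    rw [order_eq, Nat.div_eq_iff_eq_of_dvd_dvd (NeZero.ne n) (Nat.gcd_dvd_left n x.val) hd]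
  simp only [← order_eq_iff]
  exact IsAddCyclic.card_addOrderOf_eq_totient (by simpa using Nat.div_dvd_of_dvd hd)

theorem sum_zmod_gcd_val {M : Type*} [AddCommMonoid M] (f : ℕ → M) :
    ∑ x : ZMod n, f (n.gcd x.val) = ∑ d ∈ n.divisors, (n / d).totient • f d := by
  have gcd_mem (x : ZMod n) : n.gcd x.val ∈ n.divisors :=
    Nat.mem_divisors.2 ⟨Nat.gcd_dvd_left n x.val, NeZero.ne n⟩
  rw [← Finset.sum_fiberwise_of_maps_to' (fun x _ ↦ gcd_mem x)]
  refine Finset.sum_congr rfl fun d hd ↦ ?_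
  rw [Finset.sum_const, card_zmod_gcd_val_eq (Nat.dvd_of_mem_divisors hd)]

theorem card_zmod_pairs_mul_eq_intCast (c : ℤ) :
    Nat.card {xy : ZMod n × ZMod n // xy.1 * xy.2 = c} =
      ∑ d ∈ (Int.gcd n c).divisors, d * (n / d).totient := by
  have gcd_dvd : Int.gcd n c ∣ n := Int.natCast_dvd_natCast.1 (Int.gcd_dvd_left n c)
  calc Nat.card {xy : ZMod n × ZMod n // xy.1 * xy.2 = c}
      = ∑ x : ZMod n, Nat.card {y : ZMod n // x * y = c} := by
        rw [Nat.card_congr (Equiv.subtypeProdEquivSigmaSubtype fun x y : ZMod n ↦ x * y = c),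
          Nat.card_sigma]
    _ = ∑ x : ZMod n, if n.gcd x.val ∣ Int.gcd n c then n.gcd x.val else 0 := by
        simp only [card_zmod_mul_eq_intCast]
    _ = ∑ d ∈ n.divisors, (n / d).totient * if d ∣ Int.gcd n c then d else 0 :=
        sum_zmod_gcd_val fun d ↦ if d ∣ Int.gcd n c then d else 0
    _ = ∑ d ∈ (Int.gcd n c).divisors, d * (n / d).totient := by
        simp only [← Nat.divisors_filter_dvd_of_dvd (NeZero.ne n) gcd_dvd, Finset.sum_filter,
          mul_ite, mul_zero, mul_comm]

end ProductCongruence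

theorem prime_pow_mul_totient_div {p k ℓ : ℕ} (hp : p.Prime) (hk : k < ℓ) :
    p ^ k * (p ^ ℓ / p ^ k).totient = (p ^ ℓ).totient := by
  rw [Nat.pow_div hk.le hp.pos, Nat.totient_prime_pow hp (Nat.sub_pos_of_lt hk),
    Nat.totient_prime_pow hp (Nat.zero_lt_of_lt hk), ← mul_assoc, ← pow_add]
  congr 2
  omega

theorem gcd_pow_pow_mul_of_isCoprime {a u : ℤ} (hu : IsCoprime a u) {N ℓ : ℕ} (h : N ≤ ℓ) :
    Int.gcd (a ^ ℓ) (a ^ N * u) = a.natAbs ^ N := by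
  rw [← Nat.add_sub_of_le h, pow_add, Int.gcd_mul_left,
    Int.isCoprime_iff_gcd_eq_one.1 hu.pow_left, mul_one, Int.natAbs_pow]

theorem stmt_9 (p : ℕ) (hp : p.Prime) (u : ℤ) (hu : ¬ (p : ℤ) ∣ u)
    (N ℓ : ℕ) (hNℓ : N < ℓ) :
    Nat.card {xy : ZMod (p ^ ℓ) × ZMod (p ^ ℓ) //
        xy.1 * xy.2 = ((p ^ N * u : ℤ) : ZMod (p ^ ℓ))}
      = (N + 1) * (p ^ ℓ - p ^ (ℓ - 1)) := by
  have : NeZero (p ^ ℓ) := ⟨pow_ne_zero _ hp.ne_zero⟩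
  have coprime : IsCoprime (p : ℤ) u := (Nat.prime_iff_prime_int.1 hp).coprime_iff_not_dvd.2 hu
  have totient_eq : (p ^ ℓ).totient = p ^ ℓ - p ^ (ℓ - 1) := by
    rw [Nat.totient_prime_pow hp (Nat.zero_lt_of_lt hNℓ), Nat.mul_sub_one,
      pow_sub_one_mul (Nat.ne_zero_of_lt hNℓ)]
  calc Nat.card {xy : ZMod (p ^ ℓ) × ZMod (p ^ ℓ) //
        xy.1 * xy.2 = ((p ^ N * u : ℤ) : ZMod (p ^ ℓ))}
      = ∑ d ∈ (p ^ N).divisors, d * (p ^ ℓ / d).totient := by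
        rw [card_zmod_pairs_mul_eq_intCast, Nat.cast_pow,
          gcd_pow_pow_mul_of_isCoprime coprime hNℓ.le, Int.natAbs_natCast]
    _ = ∑ k ∈ Finset.range (N + 1), p ^ k * (p ^ ℓ / p ^ k).totient :=
        Nat.sum_divisors_prime_pow hp
    _ = ∑ _k ∈ Finset.range (N + 1), (p ^ ℓ).totient :=
        Finset.sum_congr rfl fun k hk ↦ prime_pow_mul_totient_div hp
          ((Finset.mem_range_succ_iff.1 hk).trans_lt hNℓ)
    _ = (N + 1) * (p ^ ℓ - p ^ (ℓ - 1)) := by simp [totient_eq]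
end

section
/- Let p be a prime and ℓ a natural number. Then the number of pairs (x, y) ∈ (ℤ/p^ℓℤ)² with x·y = 0 is exactly p^ℓ + ℓ·(p^ℓ − p^{ℓ−1}). -/
/-! Multiplication by `x` on `ZMod n` has image the additive subgroup generated by `x`, so `x` is
annihilated by exactly `n / d` elements, where `d` is the additive order of `x`. The cyclic group
`ZMod n` has `φ d` elements of order `d` for each `d ∣ n`, so `x * y = 0` has `∑ φ d * (n / d)`
solutions. For `n = p ^ ℓ` the divisor `1` contributes `p ^ ℓ` and each of the `ℓ` others
contributes `p ^ ℓ - p ^ (ℓ - 1)`. -/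

open scoped Nat

theorem range_mulLeft_eq_zmultiples {n : ℕ} (x : ZMod n) :
    (AddMonoidHom.mulLeft x).range = AddSubgroup.zmultiples x := by
  ext z
  simp only [AddMonoidHom.mem_range, AddMonoidHom.coe_mulLeft, AddSubgroup.mem_zmultiples_iff,
    zsmul_eq_mul, mul_comm x]
  exact ZMod.intCast_surjective.exists

theorem card_annihilator_mul_addOrderOf {n : ℕ} (x : ZMod n) :
    Nat.card {y : ZMod n // x * y = 0} * addOrderOf x = n :=
  calc Nat.card {y : ZMod n // x * y = 0} * addOrderOf x
    _ = Nat.card (AddMonoidHom.mulLeft x).ker * (AddMonoidHom.mulLeft x).ker.index := by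
      rw [AddSubgroup.index_ker, range_mulLeft_eq_zmultiples, Nat.card_zmultiples]
      rfl
    _ = n := by rw [AddSubgroup.card_mul_index, Nat.card_zmod]

theorem sum_comp_addOrderOf {G M : Type*} [AddGroup G] [IsAddCyclic G] [Fintype G]
    [AddCommMonoid M] (f : ℕ → M) :
    ∑ x : G, f (addOrderOf x) = ∑ d ∈ (Fintype.card G).divisors, φ d • f d := by
  have addOrderOf_mem_divisors (x : G) (_ : x ∈ Finset.univ) :
      addOrderOf x ∈ (Fintype.card G).divisors :=
    Nat.mem_divisors.2 ⟨addOrderOf_dvd_card, Fintype.card_ne_zero⟩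
  rw [← Finset.sum_fiberwise_of_maps_to' addOrderOf_mem_divisors]
  refine Finset.sum_congr rfl fun d hd => ?_
  rw [Finset.sum_const, IsAddCyclic.card_addOrderOf_eq_totient (Nat.dvd_of_mem_divisors hd)]

theorem card_mul_eq_zero_eq_sum_divisors (n : ℕ) [NeZero n] :
    Nat.card {xy : ZMod n × ZMod n // xy.1 * xy.2 = 0} = ∑ d ∈ n.divisors, φ d * (n / d) :=
  calc Nat.card {xy : ZMod n × ZMod n // xy.1 * xy.2 = 0}
    _ = ∑ x : ZMod n, Nat.card {y : ZMod n // x * y = 0} := by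
      rw [← Nat.card_sigma]
      exact Nat.card_congr (Equiv.subtypeProdEquivSigmaSubtype fun x y : ZMod n => x * y = 0)
    _ = ∑ x : ZMod n, n / addOrderOf x :=
      Finset.sum_congr rfl fun x _ =>
        Nat.eq_div_of_mul_eq_left (addOrderOf_pos x).ne' (card_annihilator_mul_addOrderOf x)
    _ = ∑ d ∈ n.divisors, φ d * (n / d) := by
      simp only [sum_comp_addOrderOf (n / ·), ZMod.card, smul_eq_mul]

theorem totient_prime_pow_mul_div {p : ℕ} (hp : p.Prime) {k ℓ : ℕ} (hk : k < ℓ) :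
    φ (p ^ (k + 1)) * (p ^ ℓ / p ^ (k + 1)) = p ^ ℓ - p ^ (ℓ - 1) := by
  obtain ⟨m, rfl⟩ := Nat.exists_eq_add_of_le (Nat.succ_le_of_lt hk)
  calc φ (p ^ (k + 1)) * (p ^ (k + 1 + m) / p ^ (k + 1))
    _ = p ^ k * (p - 1) * p ^ m := by
      rw [Nat.totient_prime_pow_succ hp, pow_add, Nat.mul_div_cancel_left _ (pow_pos hp.pos _)]
    _ = p ^ (k + m) * (p - 1) := by ring
    _ = p ^ (k + 1 + m) - p ^ (k + 1 + m - 1) := by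
      rw [Nat.mul_sub_one, ← pow_succ, Nat.add_right_comm k 1 m, Nat.add_sub_cancel]

theorem stmt_10 (p : ℕ) (hp : p.Prime) (ℓ : ℕ) :
    Nat.card {xy : ZMod (p ^ ℓ) × ZMod (p ^ ℓ) // xy.1 * xy.2 = 0}
      = p ^ ℓ + ℓ * (p ^ ℓ - p ^ (ℓ - 1)) := by
  have : NeZero (p ^ ℓ) := ⟨pow_ne_zero ℓ hp.ne_zero⟩
  calc Nat.card {xy : ZMod (p ^ ℓ) × ZMod (p ^ ℓ) // xy.1 * xy.2 = 0}
    _ = ∑ i ∈ Finset.range (ℓ + 1), φ (p ^ i) * (p ^ ℓ / p ^ i) := by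
      rw [card_mul_eq_zero_eq_sum_divisors, Nat.sum_divisors_prime_pow hp]
    _ = p ^ ℓ + ∑ k ∈ Finset.range ℓ, φ (p ^ (k + 1)) * (p ^ ℓ / p ^ (k + 1)) := by
      rw [Finset.sum_range_succ', pow_zero, Nat.totient_one, Nat.div_one, one_mul, add_comm]
    _ = p ^ ℓ + ∑ _k ∈ Finset.range ℓ, (p ^ ℓ - p ^ (ℓ - 1)) := by
      rw [Finset.sum_congr rfl fun k hk => totient_prime_pow_mul_div hp (Finset.mem_range.1 hk)]
    _ = p ^ ℓ + ℓ * (p ^ ℓ - p ^ (ℓ - 1)) := by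
      rw [Finset.sum_const, Finset.card_range, smul_eq_mul]
end

section
/- Let p be an odd prime, Δ an integer not divisible by p, and set ε = 1 if the image of Δ in ℤ/pℤ is a square and ε = −1 otherwise. Let t be a nonzero integer with p-adic valuation T. For a natural number ℓ let X_ℓ = N_ℓ / p^{2ℓ}, where N_ℓ is the number of pairs (x, y) ∈ (ℤ/p^ℓℤ)² with x² − Δ̄·y² = t̄². Then for every real z with |z| < 1, setting w = z/p, the series ∑_{ℓ≥0} z^ℓ · X_ℓ converges with sum (1 − ε·w/p)(1 − ε·w^{2T+1}) / ((1 − w)(1 − ε·w)). -/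
/-!
Call a solution of `x² - Δ y² = c` modulo `p ^ ℓ` primitive if one of its coordinates is a unit.
Each primitive solution has exactly `p` lifts from level `ℓ ≥ 1` to level `ℓ + 1`, so primitive
solutions need only be counted over `𝔽_p`, where quadratic character sums do it. If `p ∤ c` all
solutions are primitive and the series is geometric. A non-primitive solution for `p² c` modulo
`p ^ (ℓ + 2)` is `p` times a solution for `c` modulo `p ^ ℓ`, each of which arises `p ^ 2` times.
Hence, for `c ≠ 0` of valuation `2 T`, the sum `F T` of the series satisfies
`F (T + 1) = 1 + w / p + (1 + ε) (1 - 1 / p) w / (1 - w) + w² F T`.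
-/

open Set

section FibreCounting

lemma ncard_eq_mul_of_forall_ncard_fiber_eq {α β : Type*} [Finite α] [Finite β] {f : α → β}
    {s : Set α} {t : Set β} {k : ℕ} (hst : MapsTo f s t)
    (hk : ∀ b ∈ t, (s ∩ f ⁻¹' {b}).ncard = k) : s.ncard = k * t.ncard := by
  classical
  have := Fintype.ofFinite α
  have := Fintype.ofFinite β
  have hst' : (s.toFinset : Set α).MapsTo f t.toFinset := by simpa using hst
  rw [ncard_eq_toFinset_card' s, ncard_eq_toFinset_card' t,
    Finset.card_eq_sum_card_fiberwise hst', mul_comm, ← smul_eq_mul]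
  refine Finset.sum_const_nat fun b hb => ?_
  rw [← hk b (mem_toFinset.mp hb), ncard_eq_toFinset_card']
  congr 1
  ext a
  simp

variable {G H : Type*} [AddGroup G] [AddGroup H] [Finite G] [Finite H]

lemma ncard_preimage_addMonoidHom (f : G →+ H) {s : Set H} (hs : s ⊆ range f) :
    (f ⁻¹' s).ncard = Nat.card f.ker * s.ncard := by
  refine ncard_eq_mul_of_forall_ncard_fiber_eq (mapsTo_preimage f s) fun b hb => ?_
  obtain ⟨g, rfl⟩ := hs hb
  have hcoset : f ⁻¹' s ∩ f ⁻¹' {f g} = (g + ·) '' f.ker := by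
    ext x
    simp only [mem_inter_iff, mem_preimage, mem_singleton_iff, image_add_left, SetLike.mem_coe,
      AddMonoidHom.mem_ker, map_add, map_neg, neg_add_eq_zero]
    exact ⟨fun h => h.2.symm, fun h => ⟨h ▸ hb, h.symm⟩⟩
  rw [hcoset, ncard_image_of_injective _ (add_right_injective g)]
  exact (Nat.card_coe_set_eq _).symm

lemma ncard_preimage_prodMap_addMonoidHom (f : G →+ H) {s : Set (H × H)}
    (hs : s ⊆ range (Prod.map f f)) :
    (Prod.map f f ⁻¹' s).ncard = Nat.card f.ker ^ 2 * s.ncard := by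
  have hker : Nat.card (f.prodMap f).ker = Nat.card f.ker ^ 2 := by
    rw [AddMonoidHom.ker_prodMap, Nat.card_congr (AddSubgroup.prodEquiv _ _).toEquiv,
      Nat.card_prod, sq]
  rw [← hker]
  exact ncard_preimage_addMonoidHom (f.prodMap f) hs

end FibreCounting

section Conic

variable {R S : Type*} [CommRing R] [CommRing S]

/-- The affine conic `x² - Δ y² = c` over `R`, as a set of points. -/
def normConic (Δ c : R) : Set (R × R) :=
  {v | v.1 ^ 2 - Δ * v.2 ^ 2 = c}

/-- The pairs with an invertible coordinate. Over a local ring these are the unimodular vectors,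
at which the form `x² - Δ y²` is smooth if `2` and `Δ` are units. -/
def primitivePairs (R : Type*) [CommRing R] : Set (R × R) :=
  {v | IsUnit v.1 ∨ IsUnit v.2}

lemma normConic_subset_primitivePairs [IsLocalRing R] {Δ c : R} (hc : IsUnit c) :
    normConic Δ c ⊆ primitivePairs R := by
  rintro ⟨x, y⟩ rfl
  by_contra hxy
  obtain ⟨hx, hy⟩ : x ∈ IsLocalRing.maximalIdeal R ∧ y ∈ IsLocalRing.maximalIdeal R :=
    not_or.mp hxy
  refine (IsLocalRing.mem_maximalIdeal _).mp ?_ hc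
  exact sub_mem (Ideal.pow_mem_of_mem _ hx 2 two_pos)
    (Ideal.mul_mem_left _ _ (Ideal.pow_mem_of_mem _ hy 2 two_pos))

lemma ncard_linear_equation {M : Type*} [AddCommGroup M] [Module R M] {α β : R}
    (h : IsUnit α ∨ IsUnit β) (m : M) :
    {k : M × M | α • k.1 + β • k.2 = m}.ncard = Nat.card M := by
  wlog hα : IsUnit α generalizing α β
  · rw [← this h.symm (h.resolve_left hα), ← ncard_image_of_injective _ Prod.swap_injective]
    congr 1
    ext k
    simp [image_swap_eq_preimage_swap, add_comm]
  obtain ⟨u, rfl⟩ := hα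
  have hgraph : {k : M × M | (u : R) • k.1 + β • k.2 = m} =
      range fun b => (u⁻¹ • (m - β • b), b) := by
    ext ⟨a, b⟩
    have h : u • a + β • b = m ↔ u⁻¹ • (m - β • b) = a := by
      rw [inv_smul_eq_iff, sub_eq_iff_eq_add, eq_comm]
    simpa [← Units.smul_def] using h
  rw [hgraph, ← image_univ, ncard_image_of_injective _ fun a b hab => (Prod.ext_iff.mp hab).2,
    ncard_univ]

lemma isLocalHom_of_ker_mul_ker_eq_zero {π : R →+* S} (hπ : Function.Surjective π)
    (hker : ∀ a ∈ RingHom.ker π, ∀ b ∈ RingHom.ker π, a * b = 0) : IsLocalHom π where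
  map_nonunit x hx := by
    obtain ⟨y', hy'⟩ := hx.exists_right_inv
    obtain ⟨y, rfl⟩ := hπ y'
    have hxy : x * y - 1 ∈ RingHom.ker π := by
      rw [RingHom.mem_ker, map_sub, map_mul, hy', map_one, sub_self]
    have hunit := IsNilpotent.isUnit_one_add ⟨2, (sq _).trans (hker _ hxy _ hxy)⟩
    rw [add_sub_cancel] at hunit
    exact isUnit_of_mul_isUnit_left hunit

lemma mk_add_mem_normConic_iff {Δ c x y a b : R} (ha : a * a = 0) (hb : b * b = 0) :
    (x + a, y + b) ∈ normConic Δ c ↔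
      2 * x * a + -(2 * Δ * y) * b = c - (x ^ 2 - Δ * y ^ 2) := by
  rw [normConic, mem_ofPred_eq]
  constructor <;> intro h
  · linear_combination h - ha + Δ * hb
  · linear_combination h + ha - Δ * hb

lemma ncard_normConic_inter_fiber {π : R →+* S}
    (hker : ∀ a ∈ RingHom.ker π, ∀ b ∈ RingHom.ker π, a * b = 0) {Δ c x y : R}
    (h2 : IsUnit (2 : R)) (hΔ : IsUnit Δ) (hprim : (x, y) ∈ primitivePairs R)
    (hconic : (π x, π y) ∈ normConic (π Δ) (π c)) :
    (normConic Δ c ∩ Prod.map π π ⁻¹' {(π x, π y)}).ncard = Nat.card (RingHom.ker π) := by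
  have hm : c - (x ^ 2 - Δ * y ^ 2) ∈ RingHom.ker π := by
    simpa [normConic, RingHom.mem_ker, sub_eq_zero] using hconic.symm
  have hcoeff : IsUnit (2 * x) ∨ IsUnit (-(2 * Δ * y)) :=
    hprim.imp h2.mul fun hy => ((h2.mul hΔ).mul hy).neg
  rw [← ncard_linear_equation hcoeff (⟨_, hm⟩ : RingHom.ker π)]
  symm
  refine ncard_congr (fun k _ => (x + k.1, y + k.2)) ?_ ?_ ?_
  · rintro ⟨⟨a, ha⟩, ⟨b, hb⟩⟩ hab
    have hmem := (mk_add_mem_normConic_iff (hker a ha a ha) (hker b hb b hb)).mpr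
      (congrArg Subtype.val hab)
    refine ⟨hmem, ?_⟩
    simp [RingHom.mem_ker.mp ha, RingHom.mem_ker.mp hb]
  · rintro ⟨a, b⟩ ⟨a', b'⟩ - - h
    simpa using h
  · rintro ⟨x', y'⟩ ⟨hx'y', hπ⟩
    obtain ⟨hx', hy'⟩ := Prod.ext_iff.mp hπ
    have ha : x' - x ∈ RingHom.ker π := RingHom.sub_mem_ker_iff π |>.mpr hx'
    have hb : y' - y ∈ RingHom.ker π := RingHom.sub_mem_ker_iff π |>.mpr hy'
    refine ⟨(⟨_, ha⟩, ⟨_, hb⟩), ?_, by simp⟩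
    refine Subtype.ext ((mk_add_mem_normConic_iff (hker _ ha _ ha) (hker _ hb _ hb)).mp ?_)
    simpa using hx'y'

/-- Hensel's lemma, by counting: `ker π` squares to zero, so on a fibre of `π × π` over a primitive
point the equation is affine, with linear part onto `ker π`. -/
lemma ncard_normConic_inter_primitivePairs_of_surjective [Finite R] [Finite S] {π : R →+* S}
    (hπ : Function.Surjective π)
    (hker : ∀ a ∈ RingHom.ker π, ∀ b ∈ RingHom.ker π, a * b = 0) {Δ : R}
    (h2 : IsUnit (2 : R)) (hΔ : IsUnit Δ) (c : R) :
    (normConic Δ c ∩ primitivePairs R).ncard =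
      Nat.card (RingHom.ker π) * (normConic (π Δ) (π c) ∩ primitivePairs S).ncard := by
  have := isLocalHom_of_ker_mul_ker_eq_zero hπ hker
  have hprim : primitivePairs R = Prod.map π π ⁻¹' primitivePairs S := by
    ext v
    exact (or_congr (isUnit_map_iff π v.1) (isUnit_map_iff π v.2)).symm
  have hconic : MapsTo (Prod.map π π) (normConic Δ c) (normConic (π Δ) (π c)) := fun v hv => by
    simpa [normConic] using congrArg π hv
  refine ncard_eq_mul_of_forall_ncard_fiber_eq (f := Prod.map π π)
    (hconic.inter_inter (hprim ▸ mapsTo_preimage _ _)) ?_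
  rintro w ⟨hw, hw'⟩
  obtain ⟨⟨x, y⟩, rfl⟩ := (hπ.prodMap hπ) w
  rw [← ncard_normConic_inter_fiber hker h2 hΔ (hprim ▸ hw') hw, inter_assoc, hprim,
    ← preimage_inter]
  congr 3
  exact inter_eq_right.mpr (singleton_subset_iff.mpr hw')

end Conic

section FiniteField

variable {F : Type*} [Field F]

lemma normConic_zero_sdiff_primitivePairs (Δ : F) : normConic Δ 0 \ primitivePairs F = {0} := by
  ext ⟨x, y⟩
  simp only [normConic, primitivePairs, mem_sdiff, mem_ofPred_eq, isUnit_iff_ne_zero, not_or,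
    not_not, mem_singleton_iff, Prod.mk_eq_zero, and_iff_right_iff_imp]
  rintro ⟨rfl, rfl⟩
  ring

/-- The asymptotes of the hyperbola give the coordinates `x + y = u`, `x - y = c / u`. -/
lemma ncard_normConic_one (hF : ringChar F ≠ 2) {c : F} (hc : c ≠ 0) :
    (normConic 1 c).ncard = Nat.card Fˣ := by
  have h2 : (2 : F) ≠ 0 := Ring.two_ne_zero hF
  rw [← ncard_univ]
  symm
  refine ncard_congr (fun u _ => ((u + c / u) / 2, (u - c / u) / 2)) ?_ ?_ ?_
  · intro u _
    have := u.ne_zero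
    simp only [normConic, mem_ofPred_eq]
    field_simp
    ring
  · intro u v _ _ h
    have hsum (u : Fˣ) : (u + c / u) / 2 + (u - c / u) / 2 = (u : F) := by
      field_simp
      ring
    obtain ⟨hx, hy⟩ := Prod.mk.inj h
    exact Units.ext (by rw [← hsum u, ← hsum v, hx, hy])
  · rintro ⟨x, y⟩ h
    have hxy : (x + y) * (x - y) = c := by
      rw [← h]
      ring
    have hu : x + y ≠ 0 := left_ne_zero_of_mul (hxy ▸ hc)
    refine ⟨Units.mk0 _ hu, mem_univ _, ?_⟩
    rw [Units.val_mk0, ← hxy, mul_div_cancel_left₀ _ hu]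
    ext <;> field_simp <;> ring

variable [Fintype F] [DecidableEq F]

lemma sum_ite_sq_eq (hF : ringChar F ≠ 2) (a : F) :
    ∑ x : F, (if x ^ 2 = a then 1 else 0) = quadraticChar F a + 1 := by
  rw [← quadraticChar_card_sqrts hF a, Finset.sum_boole]
  congr 2
  ext x
  simp

lemma ncard_normConic_eq_sum (hF : ringChar F ≠ 2) (Δ c : F) :
    ((normConic Δ c).ncard : ℤ) = Fintype.card F + ∑ y, quadraticChar F (c + Δ * y ^ 2) := by
  rw [normConic, ncard_eq_toFinset_card', toFinset_ofPred, Finset.card_filter,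
    Fintype.sum_prod_type_right]
  push_cast
  simp only [sub_eq_iff_eq_add, sum_ite_sq_eq hF, Finset.sum_add_distrib, Finset.sum_const,
    Finset.card_univ, nsmul_eq_mul, mul_one]
  ring

lemma sum_quadraticChar_add_sq (hF : ringChar F ≠ 2) {c : F} (hc : c ≠ 0) :
    ∑ y : F, quadraticChar F (c + y ^ 2) = -1 := by
  have h := ncard_normConic_eq_sum hF 1 c
  rw [ncard_normConic_one hF hc, Nat.card_units, Nat.card_eq_fintype_card,
    Nat.cast_sub Fintype.card_pos] at h
  simp only [one_mul] at h
  push_cast at h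
  linarith

lemma ncard_normConic_of_ne_zero (hF : ringChar F ≠ 2) {Δ c : F} (hΔ : Δ ≠ 0) (hc : c ≠ 0) :
    ((normConic Δ c).ncard : ℤ) = Fintype.card F - quadraticChar F Δ := by
  have hfactor (y : F) : quadraticChar F (c + Δ * y ^ 2) =
      quadraticChar F Δ * quadraticChar F (c / Δ + y ^ 2) := by
    rw [← map_mul, mul_add, mul_div_cancel₀ _ hΔ]
  rw [ncard_normConic_eq_sum hF, Finset.sum_congr rfl fun y _ => hfactor y, ← Finset.mul_sum,
    sum_quadraticChar_add_sq hF (div_ne_zero hc hΔ)]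
  ring

lemma ncard_normConic_zero (hF : ringChar F ≠ 2) (Δ : F) :
    ((normConic Δ 0).ncard : ℤ) =
      Fintype.card F + quadraticChar F Δ * (Fintype.card F - 1) := by
  have hterm (y : F) : quadraticChar F (0 + Δ * y ^ 2) =
      quadraticChar F Δ * (1 - if y = 0 then 1 else 0) := by
    split_ifs with hy
    · simp [hy]
    · rw [zero_add, map_mul, quadraticChar_sq_one' hy, sub_zero]
  rw [ncard_normConic_eq_sum hF, Finset.sum_congr rfl fun y _ => hterm y, ← Finset.mul_sum]
  simp

lemma ncard_normConic_zero_inter_primitivePairs (hF : ringChar F ≠ 2) (Δ : F) :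
    ((normConic Δ 0 ∩ primitivePairs F).ncard : ℤ) =
      (1 + quadraticChar F Δ) * (Fintype.card F - 1) := by
  have hsplit := ncard_inter_add_ncard_sdiff_eq_ncard (normConic Δ 0) (primitivePairs F)
  rw [normConic_zero_sdiff_primitivePairs, ncard_singleton] at hsplit
  have htotal := ncard_normConic_zero hF Δ
  rw [← hsplit] at htotal
  push_cast at htotal
  linarith

end FiniteField

section ZModPrimePow

lemma card_ker_castHom {m n N : ℕ} (hN : m * n = N) (hN0 : N ≠ 0) :
    Nat.card (RingHom.ker (ZMod.castHom (Dvd.intro_left m hN) (ZMod n))) = m := by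
  set π := ZMod.castHom (Dvd.intro_left m hN) (ZMod n)
  have hn : 0 < n := Nat.pos_of_ne_zero fun h => hN0 (by rw [← hN, h, mul_zero])
  have hπ : Function.Surjective π := ZMod.castHom_surjective _
  have h := AddSubgroup.card_mul_index (π : ZMod N →+ ZMod n).ker
  rw [AddSubgroup.index_ker, AddMonoidHom.range_eq_top.mpr hπ,
    AddSubgroup.card_top, Nat.card_zmod, Nat.card_zmod] at h
  exact Nat.eq_of_mul_eq_mul_right hn (h.trans hN.symm)

lemma natCast_mul_eq_zero_iff {m n N : ℕ} (hN : m * n = N) (hN0 : N ≠ 0) (a : ZMod N) :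
    (m : ZMod N) * a = 0 ↔ ZMod.castHom (Dvd.intro_left m hN) (ZMod n) a = 0 := by
  obtain ⟨k, rfl⟩ := ZMod.intCast_surjective a
  have hm : (m : ℤ) ≠ 0 := by
    rintro hm
    exact hN0 (by rw [← hN, Nat.cast_eq_zero.mp hm, zero_mul])
  rw [map_intCast, ZMod.intCast_zmod_eq_zero_iff_dvd, ← mul_dvd_mul_iff_left hm, ← Nat.cast_mul,
    hN, ← ZMod.intCast_zmod_eq_zero_iff_dvd, Int.cast_mul, Int.cast_natCast]

lemma mul_eq_zero_of_mem_ker_castHom {n N : ℕ} (hn : n ∣ N) (hN : N ∣ n * n) {a b : ZMod N}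
    (ha : a ∈ RingHom.ker (ZMod.castHom hn (ZMod n)))
    (hb : b ∈ RingHom.ker (ZMod.castHom hn (ZMod n))) : a * b = 0 := by
  obtain ⟨j, rfl⟩ := ZMod.intCast_surjective a
  obtain ⟨k, rfl⟩ := ZMod.intCast_surjective b
  rw [RingHom.mem_ker, map_intCast, ZMod.intCast_zmod_eq_zero_iff_dvd] at ha hb
  rw [← Int.cast_mul, ZMod.intCast_zmod_eq_zero_iff_dvd]
  exact (Int.natCast_dvd_natCast.mpr hN).trans (Nat.cast_mul (α := ℤ) n n ▸ mul_dvd_mul ha hb)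

lemma map_nsmul_mem_normConic_iff {m n N : ℕ} (hN : m ^ 2 * n = N) (hN0 : N ≠ 0) (Δ c : ℤ)
    (v : ZMod N × ZMod N) :
    (m • v.1, m • v.2) ∈ normConic (Δ : ZMod N) ((m ^ 2 * c : ℤ) : ZMod N) ↔
      Prod.map (ZMod.castHom (Dvd.intro_left _ hN) (ZMod n))
        (ZMod.castHom (Dvd.intro_left _ hN) (ZMod n)) v ∈ normConic (Δ : ZMod n) c := by
  have h := natCast_mul_eq_zero_iff hN hN0 (v.1 ^ 2 - Δ * v.2 ^ 2 - c)
  rw [map_sub, map_sub, map_mul, map_pow, map_pow, map_intCast, map_intCast, sub_eq_zero] at h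
  refine Iff.trans ?_ h
  rw [normConic, mem_ofPred_eq, ← sub_eq_zero]
  push_cast [nsmul_eq_mul]
  ring_nf

variable (p : ℕ) [Fact p.Prime]

instance isLocalRing_zmod_prime_pow_succ (ℓ : ℕ) : IsLocalRing (ZMod (p ^ (ℓ + 1))) :=
  have : Fact (1 < p ^ (ℓ + 1)) := ⟨Nat.one_lt_pow ℓ.succ_ne_zero (Fact.out : p.Prime).one_lt⟩
  .of_surjective' (PadicInt.toZModPow (ℓ + 1)) (ZMod.ringHom_surjective _)

variable {p}

lemma isUnit_intCast_zmod_pow_succ {a : ℤ} (ha : ¬ (p : ℤ) ∣ a) (ℓ : ℕ) :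
    IsUnit (a : ZMod (p ^ (ℓ + 1))) := by
  rw [ZMod.coe_int_isUnit_iff_isCoprime, Nat.cast_pow]
  exact ((Nat.prime_iff_prime_int.mp Fact.out).coprime_iff_not_dvd.mpr ha).pow_left

lemma not_isUnit_zmod_pow_succ_iff {ℓ : ℕ} {x : ZMod (p ^ (ℓ + 1))} :
    ¬ IsUnit x ↔ ∃ y, p • y = x := by
  constructor
  · intro hx
    rw [← ZMod.natCast_zmod_val x, ZMod.isUnit_natCast_iff_not_dvd_pow Fact.out ℓ.succ_pos,
      not_not] at hx
    obtain ⟨k, hk⟩ := hx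
    exact ⟨k, by rw [nsmul_eq_mul, ← Nat.cast_mul, ← hk, ZMod.natCast_zmod_val]⟩
  · rintro ⟨y, rfl⟩ h
    rw [nsmul_eq_mul] at h
    exact ZMod.prime_natCast_not_isUnit_pow Fact.out ℓ.succ_pos (isUnit_of_mul_isUnit_left h)

lemma card_ker_nsmul_zmod_pow_succ (ℓ : ℕ) :
    Nat.card (nsmulAddMonoidHom p : ZMod (p ^ (ℓ + 1)) →+ _).ker = p := by
  have hp0 : p ^ (ℓ + 1) ≠ 0 := NeZero.ne _
  have hN : p * p ^ ℓ = p ^ (ℓ + 1) := (pow_succ' p ℓ).symm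
  refine (Nat.card_congr (Equiv.subtypeEquivRight fun a => ?_)).trans (card_ker_castHom hN hp0)
  rw [AddMonoidHom.mem_ker, RingHom.mem_ker, nsmulAddMonoidHom_apply, nsmul_eq_mul,
    natCast_mul_eq_zero_iff hN hp0]

lemma compl_primitivePairs_zmod_pow_succ (ℓ : ℕ) :
    (primitivePairs (ZMod (p ^ (ℓ + 1))))ᶜ =
      range (Prod.map (nsmulAddMonoidHom p) (nsmulAddMonoidHom p)) := by
  ext ⟨x, y⟩
  simp only [primitivePairs, mem_compl_iff, mem_ofPred_eq, not_or, not_isUnit_zmod_pow_succ_iff,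
    range_prodMap, mem_prod, mem_range, nsmulAddMonoidHom_apply]

end ZModPrimePow

section PointCount

/-- The number `N_ℓ` of solutions of `x² - Δ y² = c` modulo `p ^ ℓ`. -/
noncomputable def pointCount (p : ℕ) (Δ c : ℤ) (ℓ : ℕ) : ℕ :=
  (normConic (Δ : ZMod (p ^ ℓ)) c).ncard

lemma pointCount_zero (p : ℕ) (Δ c : ℤ) : pointCount p Δ c 0 = 1 := by
  have : Subsingleton (ZMod (p ^ 0)) := by
    rw [pow_zero]
    infer_instance
  have huniv : normConic (Δ : ZMod (p ^ 0)) c = univ :=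
    eq_univ_of_forall fun _ => Subsingleton.elim _ _
  rw [pointCount, huniv, ncard_univ, Nat.card_unique]

variable {p : ℕ} [Fact p.Prime] {Δ : ℤ}

lemma ncard_normConic_inter_primitivePairs_zmod_pow_add_two (hp2 : p ≠ 2)
    (hΔ : ¬ (p : ℤ) ∣ Δ) (c : ℤ) (ℓ : ℕ) :
    (normConic (Δ : ZMod (p ^ (ℓ + 2))) c ∩ primitivePairs _).ncard =
      p * (normConic (Δ : ZMod (p ^ (ℓ + 1))) c ∩ primitivePairs _).ncard := by
  have hN : p * p ^ (ℓ + 1) = p ^ (ℓ + 2) := (pow_succ' p _).symm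
  have hsq : p ^ (ℓ + 2) ∣ p ^ (ℓ + 1) * p ^ (ℓ + 1) := by
    rw [← pow_add]
    exact pow_dvd_pow p (by lia)
  have h2 : ¬ (p : ℤ) ∣ 2 := by
    intro h
    exact hp2 ((Nat.prime_dvd_prime_iff_eq Fact.out Nat.prime_two).mp (by exact_mod_cast h))
  have h := ncard_normConic_inter_primitivePairs_of_surjective
    (ZMod.castHom_surjective (Dvd.intro_left p hN))
    (fun _ ha _ hb => mul_eq_zero_of_mem_ker_castHom _ hsq ha hb)
    (by exact_mod_cast isUnit_intCast_zmod_pow_succ h2 (ℓ + 1))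
    (isUnit_intCast_zmod_pow_succ hΔ (ℓ + 1)) c
  rwa [card_ker_castHom hN (NeZero.ne _), map_intCast, map_intCast] at h

lemma ncard_normConic_inter_primitivePairs_zmod_pow (hp2 : p ≠ 2) (hΔ : ¬ (p : ℤ) ∣ Δ)
    (c : ℤ) (ℓ : ℕ) :
    (normConic (Δ : ZMod (p ^ (ℓ + 1))) c ∩ primitivePairs _).ncard =
      p ^ ℓ * (normConic (Δ : ZMod p) c ∩ primitivePairs _).ncard := by
  induction ℓ with
  | zero => rw [zero_add, pow_one, pow_zero, one_mul]
  | succ ℓ ih =>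
    rw [ncard_normConic_inter_primitivePairs_zmod_pow_add_two hp2 hΔ, ih, pow_succ', mul_assoc]

/-- Multiplication by `p` and reduction modulo `p ^ ℓ` pull the two sets of points back to the same
subset of `(ℤ/p^(ℓ+2)ℤ)²`. -/
lemma ncard_normConic_sdiff_primitivePairs (Δ c : ℤ) (ℓ : ℕ) :
    (normConic (Δ : ZMod (p ^ (ℓ + 2))) ((p ^ 2 * c : ℤ) : ZMod (p ^ (ℓ + 2))) \
      primitivePairs _).ncard = p ^ 2 * pointCount p Δ c ℓ := by
  have hN : p ^ 2 * p ^ ℓ = p ^ (ℓ + 2) := by rw [add_comm, pow_add]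
  have hN0 : p ^ (ℓ + 2) ≠ 0 := NeZero.ne _
  set f : ZMod (p ^ (ℓ + 2)) →+ ZMod (p ^ (ℓ + 2)) := nsmulAddMonoidHom p
  set π := ZMod.castHom (Dvd.intro_left _ hN) (ZMod (p ^ ℓ))
  set s := normConic (Δ : ZMod (p ^ (ℓ + 2))) ((p ^ 2 * c : ℤ) : ZMod (p ^ (ℓ + 2))) \
    primitivePairs _ with hs
  have hsrange : s ⊆ range (Prod.map f f) := by
    rw [hs, ← compl_primitivePairs_zmod_pow_succ]
    exact fun v hv => hv.2
  have hpre : Prod.map f f ⁻¹' s = Prod.map π π ⁻¹' normConic (Δ : ZMod (p ^ ℓ)) c := by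
    rw [hs, sdiff_eq, compl_primitivePairs_zmod_pow_succ, preimage_inter, preimage_range,
      inter_univ]
    ext v
    exact map_nsmul_mem_normConic_iff hN hN0 Δ c v
  have hf := ncard_preimage_prodMap_addMonoidHom f hsrange
  have hπsurj : Function.Surjective π := ZMod.castHom_surjective _
  have hπ := ncard_preimage_prodMap_addMonoidHom (π : ZMod (p ^ (ℓ + 2)) →+ ZMod (p ^ ℓ))
    (s := normConic (Δ : ZMod (p ^ ℓ)) c)
    ((hπsurj.prodMap hπsurj).range_eq ▸ subset_univ _)
  have hcard : p ^ 2 * s.ncard = p ^ 2 * (p ^ 2 * pointCount p Δ c ℓ) := calc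
    p ^ 2 * s.ncard = (Prod.map f f ⁻¹' s).ncard := by
      rw [hf, card_ker_nsmul_zmod_pow_succ]
    _ = (p ^ 2) ^ 2 * pointCount p Δ c ℓ := by
      rw [hpre, ← card_ker_castHom hN hN0]
      exact hπ
    _ = p ^ 2 * (p ^ 2 * pointCount p Δ c ℓ) := by ring
  exact Nat.eq_of_mul_eq_mul_left (pow_pos (Fact.out : p.Prime).pos 2) hcard

lemma pointCount_succ_of_not_dvd (hp2 : p ≠ 2) (hΔ : ¬ (p : ℤ) ∣ Δ) {c : ℤ} (hc : ¬ (p : ℤ) ∣ c)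
    (ℓ : ℕ) :
    (pointCount p Δ c (ℓ + 1) : ℤ) = p ^ ℓ * (p - quadraticChar (ZMod p) Δ) := by
  have hchar : ringChar (ZMod p) ≠ 2 := by rwa [ZMod.ringChar_zmod_n]
  have hne {a : ℤ} (ha : ¬ (p : ℤ) ∣ a) : (a : ZMod p) ≠ 0 :=
    mt (ZMod.intCast_zmod_eq_zero_iff_dvd a p).mp ha
  have h := ncard_normConic_inter_primitivePairs_zmod_pow hp2 hΔ c ℓ
  rw [inter_eq_left.mpr (normConic_subset_primitivePairs (isUnit_intCast_zmod_pow_succ hc ℓ)),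
    inter_eq_left.mpr (normConic_subset_primitivePairs (hne hc).isUnit)] at h
  rw [pointCount, h, Nat.cast_mul, ncard_normConic_of_ne_zero hchar (hne hΔ) (hne hc), ZMod.card,
    Nat.cast_pow]

lemma pointCount_one_of_dvd (hp2 : p ≠ 2) {c : ℤ} (hc : (p : ℤ) ∣ c) :
    (pointCount p Δ c 1 : ℤ) = p + quadraticChar (ZMod p) Δ * (p - 1) := by
  have hchar : ringChar (ZMod p) ≠ 2 := by rwa [ZMod.ringChar_zmod_n]
  have h := ncard_normConic_zero hchar (Δ : ZMod p)
  rw [← (ZMod.intCast_zmod_eq_zero_iff_dvd c p).mpr hc, ZMod.card] at h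
  rw [← h, pointCount, pow_one]

lemma pointCount_add_two (hp2 : p ≠ 2) (hΔ : ¬ (p : ℤ) ∣ Δ) (c : ℤ) (ℓ : ℕ) :
    (pointCount p Δ (p ^ 2 * c) (ℓ + 2) : ℤ) =
      p ^ (ℓ + 1) * ((1 + quadraticChar (ZMod p) Δ) * (p - 1)) + p ^ 2 * pointCount p Δ c ℓ := by
  have hchar : ringChar (ZMod p) ≠ 2 := by rwa [ZMod.ringChar_zmod_n]
  have hzero : ((p ^ 2 * c : ℤ) : ZMod p) = 0 := by simp
  rw [pointCount, ← ncard_inter_add_ncard_sdiff_eq_ncard _ (primitivePairs _),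
    ncard_normConic_inter_primitivePairs_zmod_pow hp2 hΔ, ncard_normConic_sdiff_primitivePairs,
    hzero]
  push_cast
  rw [ncard_normConic_zero_inter_primitivePairs hchar, ZMod.card]

end PointCount

section GeneratingSeries

variable {𝕜 : Type*} [NormedField 𝕜] {w : 𝕜}

lemma one_sub_ne_zero_of_norm_lt_one (hw : ‖w‖ < 1) : 1 - w ≠ 0 :=
  sub_ne_zero.mpr fun h => by simp [← h] at hw

variable {p : ℕ} [Fact p.Prime] {Δ : ℤ} {ε : 𝕜}

lemma hasSum_pointCount_of_not_dvd (hp2 : p ≠ 2) (hΔ : ¬ (p : ℤ) ∣ Δ) (hp : (p : 𝕜) ≠ 0)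
    (hw : ‖w‖ < 1) (hε : ε = (quadraticChar (ZMod p) Δ : ℤ)) {c : ℤ} (hc : ¬ (p : ℤ) ∣ c) :
    HasSum (fun ℓ => pointCount p Δ c ℓ * (w / p) ^ ℓ) ((1 - ε * w / p) / (1 - w)) := by
  have hterm (ℓ : ℕ) : (pointCount p Δ c (ℓ + 1) : 𝕜) * (w / p) ^ (ℓ + 1) =
      (w - ε * w / p) * w ^ ℓ := by
    rw [← Int.cast_natCast, pointCount_succ_of_not_dvd hp2 hΔ hc, hε, div_pow]
    push_cast
    field_simp
    ring
  have hw1 := one_sub_ne_zero_of_norm_lt_one hw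
  have hsum : (1 - ε * w / p) / (1 - w) - 1 = (w - ε * w / p) * (1 - w)⁻¹ := by
    field_simp
    ring
  rw [← hasSum_nat_add_iff' 1, Finset.sum_range_one, pointCount_zero, Nat.cast_one, pow_zero,
    mul_one, hsum]
  simp only [hterm]
  exact (hasSum_geometric_of_norm_lt_one hw).mul_left _

lemma hasSum_pointCount_sq_mul (hp2 : p ≠ 2) (hΔ : ¬ (p : ℤ) ∣ Δ) (hp : (p : 𝕜) ≠ 0)
    (hw : ‖w‖ < 1) (hε : ε = (quadraticChar (ZMod p) Δ : ℤ)) {c : ℤ} {S : 𝕜}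
    (hS : HasSum (fun ℓ => pointCount p Δ c ℓ * (w / p) ^ ℓ) S) :
    HasSum (fun ℓ => pointCount p Δ (p ^ 2 * c) ℓ * (w / p) ^ ℓ)
      (1 + w / p + (1 + ε) * (1 - 1 / p) * w / (1 - w) + w ^ 2 * S) := by
  have hone : (pointCount p Δ (p ^ 2 * c) 1 : 𝕜) * (w / p) ^ 1 =
      w / p + (1 + ε) * (1 - 1 / p) * w := by
    have hdvd : (p : ℤ) ∣ p ^ 2 * c := (dvd_pow_self _ two_ne_zero).mul_right c
    rw [← Int.cast_natCast, pointCount_one_of_dvd hp2 hdvd, hε]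
    push_cast
    field_simp
    ring
  have hterm (ℓ : ℕ) : (pointCount p Δ (p ^ 2 * c) (ℓ + 2) : 𝕜) * (w / p) ^ (ℓ + 2) =
      (1 + ε) * (1 - 1 / p) * w ^ 2 * w ^ ℓ + w ^ 2 * (pointCount p Δ c ℓ * (w / p) ^ ℓ) := by
    rw [← Int.cast_natCast, pointCount_add_two hp2 hΔ, hε, div_pow, div_pow]
    push_cast
    field_simp
    ring
  have hw1 := one_sub_ne_zero_of_norm_lt_one hw
  have hsum : 1 + w / p + (1 + ε) * (1 - 1 / p) * w / (1 - w) + w ^ 2 * S -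
      (1 + (w / p + (1 + ε) * (1 - 1 / p) * w)) =
        (1 + ε) * (1 - 1 / p) * w ^ 2 * (1 - w)⁻¹ + w ^ 2 * S := by
    field_simp
    ring
  rw [← hasSum_nat_add_iff' 2, Finset.sum_range_succ, Finset.sum_range_one, pointCount_zero, hone,
    Nat.cast_one, pow_zero, mul_one, hsum]
  simp only [hterm]
  exact ((hasSum_geometric_of_norm_lt_one hw).mul_left _).add (hS.mul_left _)

lemma hasSum_pointCount_pow_mul (hp2 : p ≠ 2) (hΔ : ¬ (p : ℤ) ∣ Δ) (hp : (p : 𝕜) ≠ 0)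
    (hw : ‖w‖ < 1) (hε : ε = (quadraticChar (ZMod p) Δ : ℤ)) {u : ℤ} (hu : ¬ (p : ℤ) ∣ u)
    (T : ℕ) :
    HasSum (fun ℓ => pointCount p Δ (p ^ (2 * T) * u) ℓ * (w / p) ^ ℓ)
      ((1 - ε * w / p) * (1 - ε * w ^ (2 * T + 1)) / ((1 - w) * (1 - ε * w))) := by
  have hΔ0 : (Δ : ZMod p) ≠ 0 := mt (ZMod.intCast_zmod_eq_zero_iff_dvd Δ p).mp hΔ
  have hε2 : ε ^ 2 = 1 := by
    rw [hε]
    exact_mod_cast congrArg (Int.cast : ℤ → 𝕜) (quadraticChar_sq_one hΔ0)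
  have hεnorm : ‖ε‖ = 1 := by
    rw [← pow_eq_one_iff_of_nonneg (norm_nonneg ε) two_ne_zero, ← norm_pow, hε2, norm_one]
  have hw1 : 1 - w ≠ 0 := one_sub_ne_zero_of_norm_lt_one hw
  have hεw1 : 1 - ε * w ≠ 0 :=
    one_sub_ne_zero_of_norm_lt_one (by rwa [norm_mul, hεnorm, one_mul])
  induction T with
  | zero =>
    rw [mul_zero, pow_zero, one_mul, zero_add, pow_one, mul_div_mul_right _ _ hεw1]
    exact hasSum_pointCount_of_not_dvd hp2 hΔ hp hw hε hu
  | succ T ih =>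
    convert hasSum_pointCount_sq_mul hp2 hΔ hp hw hε ih using 1
    · ext ℓ
      rw [← mul_assoc, ← pow_add, mul_add, mul_one, add_comm 2]
    · field_simp
      linear_combination (p - 1) * w ^ 2 * hε2

end GeneratingSeries

open Classical in
theorem stmt_11_general {𝕜 : Type*} [NormedField 𝕜] (p : ℕ) (hp : p.Prime) (hp2 : p ≠ 2) (Δ : ℤ)
    (hΔ : ¬ (p : ℤ) ∣ Δ) (ε : 𝕜) (hε : ε = if IsSquare (Δ : ZMod p) then 1 else -1)
    (c : ℤ) (hc : c ≠ 0) (T : ℕ) (hT : padicValInt p c = 2 * T)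
    (z : 𝕜) (hz : ‖z‖ < ‖(p : 𝕜)‖) (w : 𝕜) (hw : w = z / p) :
    HasSum
      (fun ℓ : ℕ => z ^ ℓ *
        ((Nat.card {xy : ZMod (p ^ ℓ) × ZMod (p ^ ℓ) //
            xy.1 ^ 2 - (Δ : ZMod (p ^ ℓ)) * xy.2 ^ 2 = (c : ZMod (p ^ ℓ))} : 𝕜)
          / p ^ (2 * ℓ)))
      ((1 - ε * w / p) * (1 - ε * w ^ (2 * T + 1)) / ((1 - w) * (1 - ε * w))) := by
  have : Fact p.Prime := ⟨hp⟩
  have hp0 : (p : 𝕜) ≠ 0 := norm_pos_iff.mp ((norm_nonneg z).trans_lt hz)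
  have hw1 : ‖w‖ < 1 := by rwa [hw, norm_div, div_lt_one (norm_pos_iff.mpr hp0)]
  have hΔ0 : (Δ : ZMod p) ≠ 0 := mt (ZMod.intCast_zmod_eq_zero_iff_dvd Δ p).mp hΔ
  have hχ : ε = (quadraticChar (ZMod p) Δ : ℤ) := by
    split_ifs at hε with hsq
    · rw [(quadraticChar_one_iff_isSquare hΔ0).mpr hsq, hε, Int.cast_one]
    · rw [quadraticChar_neg_one_iff_not_isSquare.mpr hsq, hε, Int.cast_neg, Int.cast_one]
  have hfinite : FiniteMultiplicity (p : ℤ) c :=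
    Int.finiteMultiplicity_iff.mpr ⟨by simpa using hp.ne_one, hc⟩
  obtain ⟨u, hcu, hu⟩ := hfinite.exists_eq_pow_mul_and_not_dvd
  rw [← padicValInt.of_ne_one_ne_zero hp.ne_one hc, hT] at hcu
  subst hcu
  convert hasSum_pointCount_pow_mul hp2 hΔ hp0 hw1 hχ hu T using 2 with ℓ
  rw [hw, div_div, ← sq, div_pow, ← pow_mul, mul_div_left_comm]
  rfl

open Classical in
theorem stmt_11 (p : ℕ) (hp : p.Prime) (hp2 : p ≠ 2) (Δ : ℤ) (hΔ : ¬ (p : ℤ) ∣ Δ)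
    (ε : ℝ) (hε : ε = if IsSquare (Δ : ZMod p) then 1 else -1)
    (t : ℤ) (ht : t ≠ 0) (T : ℕ) (hT : padicValInt p t = T)
    (z : ℝ) (hz : |z| < 1) (w : ℝ) (hw : w = z / p) :
    HasSum
      (fun ℓ : ℕ => z ^ ℓ *
        ((Nat.card {xy : ZMod (p ^ ℓ) × ZMod (p ^ ℓ) //
            xy.1 ^ 2 - (Δ : ZMod (p ^ ℓ)) * xy.2 ^ 2 = (t : ZMod (p ^ ℓ)) ^ 2} : ℝ)
          / p ^ (2 * ℓ)))
      ((1 - ε * w / p) * (1 - ε * w ^ (2 * T + 1)) / ((1 - w) * (1 - ε * w))) := by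
  simpa only [Int.cast_pow] using stmt_11_general p hp hp2 Δ hΔ ε hε (t ^ 2) (pow_ne_zero 2 ht) T
    (by rw [sq, padicValInt.mul (hp := ⟨hp⟩) ht ht, hT, two_mul]) z
    (hz.trans_le (by simpa using hp.one_le)) w hw
end
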